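/- arXiv:1704.03702 — 2 statements merged into one kernel-verified Lean document; each statement's English description precedes it below -/
import Mathlib

section
/- Let $K$ be a field, $P=K[X_0,\dots,X_n]$ the standard graded polynomial ring, and $\mathbb X\subseteq\mathbb P^n_K$ a $0$-dimensional subscheme with set of closed points $\operatorname{Supp}(\mathbb X)=\{p_1,\dots,p_s\}$, none of which lies on $\mathcal Z(X_0)$. Let $I_{\mathbb X}\subseteq P$ be its (saturated) homogeneous vanishing ideal, $R=P/I_{\mathbb X}$, and $x_0\in R$ the (non-zerodivisor) residue class of $X_0$. Assume that $\mathbb X$ is locally Gorenstein, i.e. every local ring $\mathcal O_{\mathbb X,p_j}$ is Gorenstein. Let $\deg(\mathbb X)=\sum_j\dim_K\mathcal O_{\mathbb X,p_j}$, and let $r_{\mathbb X}$ be the least $i\ge 0$ such that $\dim_K R_{k}=\deg(\mathbb X)$ for all $k\ge i$. *Separators.* A (possibly empty) subscheme $\mathbb Y\subseteq\mathbb X$ is a maximal $p_j$-subscheme if $\mathcal O_{\mathbb Y,p_k}=\mathcal O_{\mathbb X,p_k}$ for $k\ne j$ and $\deg(\mathbb Y)=\deg(\mathbb X)-\varkappa_j$,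 where $\varkappa_j=\dim_K\kappa(p_j)$ and $\kappa(p_j)$ is the residue field at $p_j$. Let $I_{\mathbb Y/\mathbb X}=I_{\mathbb Y}/I_{\mathbb X}\subseteq R$. For $f\in R_i$ let $f_{p_k}\in\mathcal O_{\mathbb X,p_k}$ be the germ of $f/x_0^i$ at $p_k$. For $a\in\mathcal O_{\mathbb X,p_j}$ let $\mu(a)$ be the least $i\ge 0$ such that some $f\in R_i$ has $f_{p_j}=a$ and $f_{p_k}=0$ for all $k\neq j$. If $\mathbb Y$ is a maximal $p_j$-subscheme, let $s_j\neq 0$ be a socle element of $\mathcal O_{\mathbb X,p_j}$ which generates the kernel of $\mathcal O_{\mathbb X,p_j}\to\mathcal O_{\mathbb Y,p_j}$, let $e_1,\dots,e_{\varkappa_j}\in\mathcal O_{\mathbb X,p_j}$ be elements whose residue classes form a $K$-basis of $\kappa(p_j)$, and put $\mu_{\mathbb Y/\mathbb X}=\max_k\mu(e_ks_j)$, the maximal degree of a minimal separator of $\mathbb Y$ in $\mathbb X$ (it does not depend on the choices of $s_j$ and $e_1,\dots,e_{\varkappa_j}$). Let $\deg_{\mathbb X}(p_j)$ be the minimum of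 the numbers $\mu_{\mathbb Y/\mathbb X}$, where $\mathbb Y$ ranges over the maximal $p_j$-subschemes of $\mathbb X$. The scheme $\mathbb X$ is called a Cayley–Bacharach scheme if $\deg_{\mathbb X}(p_j)\ge r_{\mathbb X}$ for $j=1,\dots,s$. *Dedekind different.* Let $Q^h(R)$ be the localization of $R$ at the set of all homogeneous non-zerodivisors, with its natural $\mathbb Z$-grading, and let $L_0=K[x_0,x_0^{-1}]\subseteq Q^h(R)$. Let $\sigma$ be a homogeneous trace map of degree zero of $Q^h(R)/L_0$, that is, an $L_0$-linear map $\sigma:Q^h(R)\to L_0$, homogeneous of degree zero, such that $\Sigma:Q^h(R)\to\operatorname{Hom}_{L_0}(Q^h(R),L_0)$, $g\mapsto\sigma(g\,\cdot\,)$, is bijective. The Dedekind complementary module $\mathfrak C^\sigma_{\mathbb X}\subseteq Q^h(R)$ is the set of all $\Sigma^{-1}(\varphi\otimes\mathrm{id}_{L_0})$ with $\varphi\in\operatorname{Hom}_{K[x_0]}(R,K[x_0])$, where $\varphi\otimes\mathrm{id}_{L_0}$ is the $L_0$-linear extension of $\varphi$ to $Q^h(R)=R\otimes_{K[x_0]}L_0$,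 and the Dedekind different is $\delta^\sigma_{\mathbb X}=\{f\in Q^h(R)\mid f\cdot\mathfrak C^\sigma_{\mathbb X}\subseteq R\}$. Then $\mathbb X$ is a Cayley–Bacharach scheme if and only if, for every $p_j\in\operatorname{Supp}(\mathbb X)$, every maximal $p_j$-subscheme $\mathbb Y\subseteq\mathbb X$ satisfies $$x_0^{r_{\mathbb X}-1}\,(I_{\mathbb Y/\mathbb X})_{r_{\mathbb X}}\not\subseteq(\delta^\sigma_{\mathbb X})_{2r_{\mathbb X}-1}.$$ (The products are taken in $Q^h(R)$, so that the condition also makes sense for $r_{\mathbb X}=0$.) -/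
open MvPolynomial

attribute [local instance] MvPolynomial.gradedAlgebra

noncomputable section

universe u

/-- A closed subscheme of `ℙⁿ_K` (possibly empty), given by its homogeneous vanishing ideal in
`P = K[X_0, …, X_n]`: a homogeneous ideal `I` which is saturated, i.e. `I : ⟨X_0, …, X_n⟩ = I`. -/
structure ProjSubscheme (K : Type u) [Field K] (n : ℕ) where
  /-- the homogeneous vanishing ideal -/
  ideal : Ideal (MvPolynomial (Fin (n + 1)) K)
  homogeneous : ideal.IsHomogeneous (homogeneousSubmodule (Fin (n + 1)) K)
  saturated : ∀ F, (∀ i, X i * F ∈ ideal) → F ∈ ideal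

namespace ProjSubscheme

variable {K : Type u} [Field K] {n : ℕ} (Y : ProjSubscheme K n)

/-- The homogeneous coordinate ring `R = P / I`. -/
abbrev R : Type u := MvPolynomial (Fin (n + 1)) K ⧸ Y.ideal

/-- The homogeneous component `R_i`. -/
def comp (i : ℕ) : Submodule K Y.R :=
  (homogeneousSubmodule (Fin (n + 1)) K i).map (Ideal.Quotient.mkₐ K Y.ideal).toLinearMap

/-- The residue class `x_0` of `X_0` in `R`. -/
def x0 : Y.R := Ideal.Quotient.mk Y.ideal (X 0)

/-- The ring `R / ⟨x_0 - 1⟩ = P / (I + ⟨X_0 - 1⟩)` (dehomogenization).  It is the affine coordinate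
ring of the part of the scheme which lies in the affine chart `D_+(X_0) = 𝔸ⁿ_K`.  If no point of
the scheme lies on `Z(X_0)`, then the scheme is the spectrum of this ring. -/
abbrev Gamma : Type u :=
  MvPolynomial (Fin (n + 1)) K ⧸ (Y.ideal ⊔ Ideal.span {X 0 - 1})

/-- The closed points of the scheme (in the chart `D_+(X_0)`). -/
abbrev Pt : Type u := MaximalSpectrum Y.Gamma

/-- The local ring `𝒪_{Y,p}`. -/
abbrev O (p : Y.Pt) : Type u := Localization.AtPrime p.asIdeal

/-- The residue field `κ(p)`. -/
abbrev kappa (p : Y.Pt) : Type u := IsLocalRing.ResidueField (Y.O p)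

/-- The canonical map `R → R / ⟨x_0 - 1⟩`. -/
def dehom : Y.R →+* Y.Gamma := Ideal.Quotient.factor le_sup_left

/-- For `f ∈ R_i`, the germ `f_p ∈ 𝒪_{Y,p}` of `f` at `p`, i.e. of the function `f / x_0^i`. -/
def germ (p : Y.Pt) : Y.R →+* Y.O p := (algebraMap Y.Gamma (Y.O p)).comp Y.dehom

/-- The degree `∑_p dim_K 𝒪_{Y,p}`. -/
def deg : ℕ := ∑ᶠ p : Y.Pt, Module.finrank K (Y.O p)

end ProjSubscheme

/-- A 0-dimensional subscheme of `ℙⁿ_K` such that no point of its support lies on `Z(X_0)`.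
(A projective scheme has dimension 0 iff its homogeneous coordinate ring has Krull dimension 1;
its points are the homogeneous primes of `P` which contain `I` and do not contain `P_+`.) -/
structure ZeroDimScheme (K : Type u) [Field K] (n : ℕ) extends ProjSubscheme K n where
  zero_dim : ringKrullDim (MvPolynomial (Fin (n + 1)) K ⧸ ideal) = 1
  not_at_infinity : ∀ p : ProjectiveSpectrum (homogeneousSubmodule (Fin (n + 1)) K),
    ideal ≤ p.asHomogeneousIdeal.toIdeal → X 0 ∉ p.asHomogeneousIdeal.toIdeal

namespace ProjSubscheme

variable {K : Type u} [Field K] {n : ℕ} (Y : ProjSubscheme K n)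

lemma one_mem_comp : (1 : Y.R) ∈ Y.comp 0 :=
  ⟨1, isHomogeneous_one _ _, map_one (Ideal.Quotient.mkₐ K Y.ideal)⟩

lemma mul_mem_comp {i j : ℕ} {f g : Y.R} (hf : f ∈ Y.comp i) (hg : g ∈ Y.comp j) :
    f * g ∈ Y.comp (i + j) := by
  obtain ⟨F, hF, rfl⟩ := hf
  obtain ⟨G, hG, rfl⟩ := hg
  exact ⟨F * G, IsHomogeneous.mul hF hG, map_mul (Ideal.Quotient.mkₐ K Y.ideal) F G⟩

lemma mem_of_pow_le (N : ℕ) : ∀ F : MvPolynomial (Fin (n + 1)) K,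
    (∀ G ∈ (Ideal.span (Set.range (X : Fin (n + 1) → MvPolynomial (Fin (n + 1)) K))) ^ N,
      G * F ∈ Y.ideal) → F ∈ Y.ideal := by
  induction N with
  | zero => intro F h; simpa using h 1 (by simp)
  | succ N ih =>
    intro F h
    refine Y.saturated F fun i => ih _ fun G hG => ?_
    rw [← mul_assoc]
    refine h _ ?_
    rw [pow_succ]
    exact Ideal.mul_mem_mul hG (Ideal.subset_span ⟨i, rfl⟩)

/-- The multiplicative set of all homogeneous non-zerodivisors of `R`. -/
def homNZD : Submonoid Y.R where
  carrier := {f | f ∈ nonZeroDivisors Y.R ∧ ∃ i, f ∈ Y.comp i}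
  one_mem' := ⟨one_mem _, 0, Y.one_mem_comp⟩
  mul_mem' := by
    rintro f g ⟨hf, i, hi⟩ ⟨hg, j, hj⟩
    exact ⟨mul_mem hf hg, i + j, Y.mul_mem_comp hi hj⟩

end ProjSubscheme

namespace ZeroDimScheme

variable {K : Type u} [Field K] {n : ℕ} (S : ZeroDimScheme K n)

lemma homogeneous_mem_of_X0_mul_mem {d : ℕ} {F : MvPolynomial (Fin (n + 1)) K}
    (hF : F.IsHomogeneous d) (h : X 0 * F ∈ S.ideal) : F ∈ S.ideal := by
  classical
  have hJ : ∀ G, G ∈ S.ideal.colon {F} ↔ G * F ∈ S.ideal := fun G => by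
    simp [Submodule.mem_colon_singleton]
  have hhom : (S.ideal.colon {F}).IsHomogeneous (homogeneousSubmodule (Fin (n + 1)) K) := by
    intro i G hG
    rw [hJ] at hG ⊢
    have h1 := S.homogeneous (i + d) hG
    rwa [DirectSum.coe_decompose_mul_add_of_right_mem _ hF] at h1
  have hle : Ideal.span (Set.range X) ≤ (S.ideal.colon {F}).radical := by
    rw [hhom.radical_eq]
    refine le_sInf ?_
    rintro q ⟨hq, hJq, hprime⟩
    have hIq : S.ideal ≤ q := fun G hG => hJq ((hJ G).2 (S.ideal.mul_mem_right _ hG))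
    have h0q : X 0 ∈ q := hJq ((hJ _).2 h)
    by_cases hirr : HomogeneousIdeal.irrelevant (homogeneousSubmodule (Fin (n + 1)) K) ≤ ⟨q, hq⟩
    · refine Ideal.span_le.2 ?_
      rintro _ ⟨i, rfl⟩
      exact hirr (HomogeneousIdeal.mem_irrelevant_of_mem _ one_pos (isHomogeneous_X K i))
    · exact absurd h0q (S.not_at_infinity ⟨⟨q, hq⟩, hprime, hirr⟩ hIq)
  obtain ⟨N, hN⟩ := Ideal.exists_pow_le_of_le_radical_of_fg hle
    (IsNoetherian.noetherian _)
  exact S.mem_of_pow_le N F fun G hG => (hJ G).1 (hN hG)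

lemma mem_of_X0_mul_mem {F : MvPolynomial (Fin (n + 1)) K} (h : X 0 * F ∈ S.ideal) :
    F ∈ S.ideal := by
  classical
  rw [← DirectSum.sum_support_decompose (homogeneousSubmodule (Fin (n + 1)) K) F]
  refine Ideal.sum_mem _ fun i _ => ?_
  refine S.homogeneous_mem_of_X0_mul_mem (d := i)
    (DirectSum.decompose (homogeneousSubmodule (Fin (n + 1)) K) F i).2 ?_
  have h1 := S.homogeneous (1 + i) h
  rwa [DirectSum.coe_decompose_mul_add_of_left_mem _ (isHomogeneous_X K 0)] at h1

/-- `x_0` is a non-zerodivisor of `R`. -/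
lemma x0_mem_homNZD : S.x0 ∈ S.homNZD := by
  refine ⟨mem_nonZeroDivisors_iff_left.2 fun f hf => ?_, 1, X 0, isHomogeneous_X K 0, rfl⟩
  obtain ⟨F, rfl⟩ := Ideal.Quotient.mk_surjective f
  exact Ideal.Quotient.eq_zero_iff_mem.2
    (S.mem_of_X0_mul_mem (Ideal.Quotient.eq_zero_iff_mem.1 hf))

/-- `𝕏` is locally Gorenstein: every local ring `𝒪_{𝕏,p}` has finite injective dimension as a
module over itself. -/
def IsLocallyGorenstein : Prop :=
  ∀ p : S.Pt, ∃ d : ℕ,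
    CategoryTheory.HasInjectiveDimensionLE (ModuleCat.of (S.O p) (S.O p)) d

/-- The Hilbert function of `𝕏` (in degrees `i ≥ 0`). -/
def HF (i : ℕ) : ℕ := Module.finrank K (S.comp i)

/-- The regularity index `r_𝕏`. -/
def rX : ℕ := sInf {r : ℕ | ∀ i, r ≤ i → S.HF i = S.deg}

/-! ### Maximal `p`-subschemes and minimal separators -/

/-- For a subscheme `𝕐 ⊆ 𝕏`: the ideal `I_{𝕐/𝕏} = I_𝕐 / I_𝕏` of `𝕐` in `R`. -/
def relIdeal (Y : ProjSubscheme K n) : Ideal S.R :=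
  Y.ideal.map (Ideal.Quotient.mk S.ideal)

/-- For a subscheme `𝕐 ⊆ 𝕏`: the kernel of the canonical epimorphism `𝒪_{𝕏,p} → 𝒪_{𝕐,p}`,
i.e. the ideal of `𝒪_{𝕏,p}` generated by `I_{𝕐/𝕏}`. -/
def stalkKer (Y : ProjSubscheme K n) (p : S.Pt) : Ideal (S.O p) :=
  (S.relIdeal Y).map (S.germ p)

/-- `𝕐` is a maximal `p`-subscheme of `𝕏`. -/
structure IsMaximalSubscheme (p : S.Pt) (Y : ProjSubscheme K n) : Prop where
  /-- `𝕐 ⊆ 𝕏` -/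
  le : S.ideal ≤ Y.ideal
  /-- `𝒪_{𝕐,q} = 𝒪_{𝕏,q}` for all `q ≠ p` -/
  stalk_eq : ∀ q : S.Pt, q ≠ p → S.stalkKer Y q = ⊥
  /-- `deg 𝕐 = deg 𝕏 - dim_K κ(p)` -/
  deg_eq : Y.deg + Module.finrank K (S.kappa p) = S.deg

/-- `s` is a socle element of `𝒪_{𝕏,p}` which corresponds to `𝕐`. -/
structure IsSocleElement (p : S.Pt) (Y : ProjSubscheme K n) (s : S.O p) : Prop where
  ne_zero : s ≠ 0
  socle : ∀ b ∈ IsLocalRing.maximalIdeal (S.O p), b * s = 0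
  span_eq : S.stalkKer Y p = Ideal.span {s}

/-- The residue classes of `e_1, …, e_ϰ ∈ 𝒪_{𝕏,p}` form a `K`-basis of `κ(p)`. -/
def IsResidueBasis (p : S.Pt) (e : Fin (Module.finrank K (S.kappa p)) → S.O p) : Prop :=
  ∃ b : Module.Basis (Fin (Module.finrank K (S.kappa p))) K (S.kappa p),
    ∀ k, b k = IsLocalRing.residue (S.O p) (e k)

/-- `μ(a)` for `a ∈ 𝒪_{𝕏,p}`: the least `i` such that there is an element `f ∈ R_i` whose germ
is `a` at `p` and `0` at all other points of the support. -/
def mu (p : S.Pt) (a : S.O p) : ℕ :=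
  sInf {i : ℕ | ∃ f ∈ S.comp i, S.germ p f = a ∧ ∀ q : S.Pt, q ≠ p → S.germ q f = 0}

/-- The maximal degree `μ_{𝕐/𝕏}` of a minimal separator of `𝕐` in `𝕏`.  The minimal separators
with respect to `s` and `e_1, …, e_ϰ` have the degrees `μ(e_1 s), …, μ(e_ϰ s)`. -/
def muY (p : S.Pt) (Y : ProjSubscheme K n) : ℕ :=
  sSup {m : ℕ | ∃ s e k, S.IsSocleElement p Y s ∧ S.IsResidueBasis p e ∧ m = S.mu p (e k * s)}

/-- The degree of `p` in `𝕏`: the minimum of all `μ_{𝕐/𝕏}`, `𝕐` a maximal `p`-subscheme. -/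
def degP (p : S.Pt) : ℕ∞ :=
  ⨅ (Y : ProjSubscheme K n) (_ : S.IsMaximalSubscheme p Y), (S.muY p Y : ℕ∞)

/-- The Cayley–Bacharach property of degree `d`: every point `p` has degree at least `d + 1`.
(Degrees of points are `≥ 0`, so this is no condition if `d + 1 ≤ 0`.) -/
def CBP (d : ℤ) : Prop := ∀ p : S.Pt, ((d + 1).toNat : ℕ∞) ≤ S.degP p

/-- `𝕏` is a Cayley–Bacharach scheme. -/
def IsCayleyBacharach : Prop := S.CBP ((S.rX : ℤ) - 1)

/-! ### The Dedekind different -/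

/-- The homogeneous ring of quotients `Q^h(R)`. -/
abbrev Q : Type u := Localization S.homNZD

/-- The homogeneous component of degree `i` of `Q^h(R)`. -/
def compQ (i : ℤ) : Set S.Q :=
  {q | ∃ (a b : ℕ) (f : S.R) (g : S.homNZD),
    f ∈ S.comp a ∧ (g : S.R) ∈ S.comp b ∧ (a : ℤ) - b = i ∧ q = Localization.mk f g}

/-- `x_0` as a unit of `Q^h(R)`. -/
def x0Q : S.Qˣ :=
  (IsLocalization.map_units S.Q (⟨S.x0, S.x0_mem_homNZD⟩ : S.homNZD)).unit

/-- `K[x_0] ⊆ R`. -/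
abbrev Kx0 : Subalgebra K S.R := Algebra.adjoin K {S.x0}

/-- `L_0 = K[x_0, x_0⁻¹] ⊆ Q^h(R)`. -/
abbrev L0 : Subalgebra K S.Q := Algebra.adjoin K {(S.x0Q : S.Q), ((S.x0Q⁻¹ : S.Qˣ) : S.Q)}

/-- `Σ : Q^h(R) → Hom_{L_0}(Q^h(R), L_0)`, `g ↦ g • σ = (q ↦ σ (g q))`. -/
def Sig (σ : S.Q →ₗ[S.L0] S.L0) (g : S.Q) : S.Q →ₗ[S.L0] S.L0 where
  toFun q := σ (g * q)
  map_add' q q' := by rw [mul_add, map_add]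
  map_smul' c q := by
    have h : g * c • q = c • (g * q) := by
      show g * ((c : S.Q) * q) = (c : S.Q) * (g * q)
      ring
    rw [h, map_smul, RingHom.id_apply]

/-- `σ` is a homogeneous trace map of degree zero of `Q^h(R)/L_0`: it is homogeneous of degree
zero, and `{σ}` is a `Q^h(R)`-basis of `Hom_{L_0}(Q^h(R), L_0)`. -/
structure IsHomogeneousTraceMap (σ : S.Q →ₗ[S.L0] S.L0) : Prop where
  degree_zero : ∀ (i : ℤ), ∀ q ∈ S.compQ i, (σ q : S.Q) ∈ S.compQ i
  basis : Function.Bijective (S.Sig σ)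

/-- `ψ = φ ⊗ id_{L_0}` under `Q^h(R) = R ⊗_{K[x_0]} L_0`, i.e. the `L_0`-linear map `ψ` extends
the `K[x_0]`-linear map `φ`. -/
def IsExtension (φ : S.R →ₗ[S.Kx0] S.Kx0) (ψ : S.Q →ₗ[S.L0] S.L0) : Prop :=
  ∀ f : S.R, (ψ (algebraMap S.R S.Q f) : S.Q) = algebraMap S.R S.Q (φ f : S.R)

/-- The Dedekind complementary module `𝔠^σ_𝕏`: the set of all `Σ⁻¹(φ ⊗ id_{L_0})` with
`φ ∈ ω_R(1) = Hom_{K[x_0]}(R, K[x_0])`. -/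
def complementary (σ : S.Q →ₗ[S.L0] S.L0) : Set S.Q :=
  {g | ∃ φ : S.R →ₗ[S.Kx0] S.Kx0, S.IsExtension φ (S.Sig σ g)}

/-- The Dedekind different `δ^σ_𝕏`. -/
def different (σ : S.Q →ₗ[S.L0] S.L0) : Set S.Q :=
  {f | ∀ g ∈ S.complementary σ, f * g ∈ Set.range (algebraMap S.R S.Q)}

end ZeroDimScheme

end

open MvPolynomial

noncomputable section

universe u

lemma MvPolynomial.IsHomogeneous.aeval_mul_right {ι A B : Type*} [CommSemiring A] [CommSemiring B]
    [Algebra A B] (b : ι → B) (t : B) {F : MvPolynomial ι A} {d : ℕ} (hF : F.IsHomogeneous d) :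
    MvPolynomial.aeval (fun i => b i * t) F = MvPolynomial.aeval b F * t ^ d := by
  rw [aeval_def, aeval_def, eval₂_eq, eval₂_eq, Finset.sum_mul]
  refine Finset.sum_congr rfl fun m hm => ?_
  have hd : ∑ i ∈ m.support, m i = d := by
    have := hF.degree_eq_sum_deg_support hm
    rw [this]
  simp only [mul_pow, Finset.prod_mul_distrib]
  rw [Finset.prod_pow_eq_pow_sum, hd, mul_assoc]

lemma MvPolynomial.homogeneousComponent_mul_X {ι A : Type*} [CommSemiring A] (d : ℕ) (j : ι)
    (F : MvPolynomial ι A) :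
    homogeneousComponent (d + 1) (F * X j) = homogeneousComponent d F * X j := by
  classical
  ext m
  rw [coeff_homogeneousComponent, coeff_mul_X', coeff_mul_X', coeff_homogeneousComponent]
  by_cases hj : j ∈ m.support
  · have h1 : m = (m - Finsupp.single j 1) + Finsupp.single j 1 :=
      (tsub_add_cancel_of_le (Finsupp.single_le_iff.2
        (Nat.one_le_iff_ne_zero.2 (Finsupp.mem_support_iff.1 hj)))).symm
    have h2 : m.degree = (m - Finsupp.single j 1).degree + 1 := by
      conv_lhs => rw [h1]
      simp
    simp [hj, h2]
  · simp [hj]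

namespace ProjSubscheme

variable {K : Type u} [Field K] {n : ℕ} (Y : ProjSubscheme K n)

/-- No point of `Y` lies on the hyperplane `Z(X_0)`. -/
def AvoidsInfinity : Prop :=
  ∀ p : ProjectiveSpectrum (homogeneousSubmodule (Fin (n + 1)) K),
    Y.ideal ≤ p.asHomogeneousIdeal.toIdeal → X 0 ∉ p.asHomogeneousIdeal.toIdeal

variable {Y}

lemma AvoidsInfinity.mono {Z : ProjSubscheme K n} (hY : Y.AvoidsInfinity)
    (h : Y.ideal ≤ Z.ideal) : Z.AvoidsInfinity :=
  fun p hp => hY p (h.trans hp)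

lemma AvoidsInfinity.exists_pow_le (hY : Y.AvoidsInfinity) :
    ∃ N, idealOfVars (Fin (n + 1)) K ^ N ≤ Y.ideal ⊔ Ideal.span {X 0} := by
  have hhom : (Y.ideal ⊔ Ideal.span {X 0}).IsHomogeneous
      (homogeneousSubmodule (Fin (n + 1)) K) := by
    refine Y.homogeneous.sup (Ideal.homogeneous_span _ _ ?_)
    rintro _ rfl
    exact ⟨1, isHomogeneous_X K 0⟩
  refine Ideal.exists_pow_le_of_le_radical_of_fg ?_ (idealOfVars_fg _ _)
  rw [hhom.radical_eq]
  refine le_sInf ?_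
  rintro q ⟨hq, hJq, hprime⟩
  by_cases hirr : HomogeneousIdeal.irrelevant (homogeneousSubmodule (Fin (n + 1)) K) ≤ ⟨q, hq⟩
  · refine Ideal.span_le.2 ?_
    rintro _ ⟨i, rfl⟩
    exact hirr (HomogeneousIdeal.mem_irrelevant_of_mem _ one_pos (isHomogeneous_X K i))
  · exact absurd (hJq (Ideal.mem_sup_right (Ideal.mem_span_singleton_self _)))
      (hY ⟨⟨q, hq⟩, hprime, hirr⟩ (le_sup_left.trans hJq))

lemma AvoidsInfinity.mem_of_X0_mul_mem (hY : Y.AvoidsInfinity) {F : MvPolynomial (Fin (n + 1)) K}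
    (h : X 0 * F ∈ Y.ideal) : F ∈ Y.ideal := by
  obtain ⟨N, hN⟩ := hY.exists_pow_le
  refine Y.mem_of_pow_le N F fun G hG => ?_
  obtain ⟨A, hA, B, hB, rfl⟩ := Submodule.mem_sup.1 (hN hG)
  obtain ⟨C, rfl⟩ := Ideal.mem_span_singleton'.1 hB
  have : (A + C * X 0) * F = F * A + C * (X 0 * F) := by ring
  rw [this]
  exact add_mem (Ideal.mul_mem_left _ _ hA) (Ideal.mul_mem_left _ _ h)

lemma AvoidsInfinity.mem_of_X0_pow_mul_mem (hY : Y.AvoidsInfinity) (k : ℕ) :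
    ∀ {F : MvPolynomial (Fin (n + 1)) K}, X 0 ^ k * F ∈ Y.ideal → F ∈ Y.ideal := by
  induction k with
  | zero => intro F h; simpa using h
  | succ k ih =>
    intro F h
    refine ih (hY.mem_of_X0_mul_mem ?_)
    rwa [← mul_assoc, ← pow_succ']

variable (Y)

lemma homogeneousComponent_mem {F : MvPolynomial (Fin (n + 1)) K} (hF : F ∈ Y.ideal) (d : ℕ) :
    homogeneousComponent d F ∈ Y.ideal :=
  homogeneousComponent_mem_of_mem Y.homogeneous hF d

lemma map_eq_zero_of_homogeneous {A : Type*} [Semiring A] (f : MvPolynomial (Fin (n + 1)) K →+* A)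
    (h : ∀ d, ∀ F ∈ Y.ideal, F.IsHomogeneous d → f F = 0) {F : MvPolynomial (Fin (n + 1)) K}
    (hF : F ∈ Y.ideal) : f F = 0 := by
  rw [← sum_homogeneousComponent F, map_sum]
  exact Finset.sum_eq_zero fun d _ =>
    h d _ (Y.homogeneousComponent_mem hF d) (homogeneousComponent_isHomogeneous d F)

variable {Y}

/-- A form which vanishes on the affine part of a scheme without points at infinity lies in the
vanishing ideal. -/
lemma AvoidsInfinity.mem_ideal_of_isHomogeneous (hY : Y.AvoidsInfinity)
    {F : MvPolynomial (Fin (n + 1)) K} {d : ℕ} (hF : F.IsHomogeneous d)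
    (h : F ∈ Y.ideal ⊔ Ideal.span {X 0 - 1}) : F ∈ Y.ideal := by
  let A := Localization.Away Y.x0
  have hu : IsUnit (algebraMap Y.R A Y.x0) := IsLocalization.Away.algebraMap_isUnit Y.x0
  obtain ⟨v, hv⟩ := hu.exists_right_inv
  let f : MvPolynomial (Fin (n + 1)) K →ₐ[K] A :=
    aeval fun i => algebraMap Y.R A (Ideal.Quotient.mk Y.ideal (X i)) * v
  have hf : ∀ d, ∀ G : MvPolynomial (Fin (n + 1)) K, G.IsHomogeneous d →
      f G = algebraMap Y.R A (Ideal.Quotient.mk Y.ideal G) * v ^ d := by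
    intro d G hG
    have h1 := hG.aeval_mul_right
      (fun i => algebraMap Y.R A (Ideal.Quotient.mk Y.ideal (X i))) v
    have h2 : aeval (fun i => algebraMap Y.R A (Ideal.Quotient.mk Y.ideal (X i))) =
        ((IsScalarTower.toAlgHom K Y.R A).comp (Ideal.Quotient.mkₐ K Y.ideal)) := by
      ext i; simp
    rw [h2] at h1
    exact h1
  have hle : Y.ideal ⊔ Ideal.span {X 0 - 1} ≤ RingHom.ker f := by
    refine sup_le (fun G hG => ?_) ?_
    · refine Y.map_eq_zero_of_homogeneous (f : MvPolynomial (Fin (n + 1)) K →+* A) ?_ hG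
      intro d G hG hd
      refine (hf d G hd).trans ?_
      rw [Ideal.Quotient.eq_zero_iff_mem.2 hG, map_zero, zero_mul]
    · rw [Ideal.span_le]
      rintro _ rfl
      change f (X 0 - 1) = 0
      rw [map_sub, map_one, hf 1 _ (isHomogeneous_X K 0), pow_one, sub_eq_zero]
      exact hv
  have h0 : algebraMap Y.R A (Ideal.Quotient.mk Y.ideal F) * v ^ d = 0 :=
    (hf d F hF).symm.trans (hle h)
  have h1 : algebraMap Y.R A (Ideal.Quotient.mk Y.ideal F) = 0 := by
    have := congrArg (· * (algebraMap Y.R A Y.x0) ^ d) h0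
    simpa [mul_assoc, ← mul_pow, mul_comm v, hv] using this
  obtain ⟨⟨_, k, rfl⟩, hk⟩ := (IsLocalization.map_eq_zero_iff (Submonoid.powers Y.x0) A _).1 h1
  refine hY.mem_of_X0_pow_mul_mem k (Ideal.Quotient.eq_zero_iff_mem.1 ?_)
  rw [map_mul, map_pow]
  exact hk

variable (Y)

/-- The canonical map `R → R / ⟨x_0 - 1⟩` as a `K`-algebra homomorphism. -/
def dehomₐ : Y.R →ₐ[K] Y.Gamma := Ideal.Quotient.factorₐ K le_sup_left

lemma dehom_mk (F : MvPolynomial (Fin (n + 1)) K) :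
    Y.dehom (Ideal.Quotient.mk _ F) = Ideal.Quotient.mk _ F := rfl

lemma dehom_surjective : Function.Surjective Y.dehom := by
  intro a
  obtain ⟨F, rfl⟩ := Ideal.Quotient.mk_surjective a
  exact ⟨_, Y.dehom_mk F⟩

@[simp]
lemma dehom_x0 : Y.dehom Y.x0 = 1 := by
  refine (Ideal.Quotient.mk_eq_mk_iff_sub_mem _ _).2 ?_
  exact Ideal.mem_sup_right (Ideal.mem_span_singleton_self _)

lemma x0_mem_comp : Y.x0 ∈ Y.comp 1 := ⟨X 0, isHomogeneous_X K 0, rfl⟩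

lemma x0_pow_mem_comp (k : ℕ) : Y.x0 ^ k ∈ Y.comp k :=
  ⟨X 0 ^ k, isHomogeneous_X_pow _ _, map_pow (Ideal.Quotient.mk Y.ideal) _ _⟩

lemma comp_induction {motive : Y.R → Prop} (add : ∀ f g, motive f → motive g → motive (f + g))
    (zero : motive 0) (mem : ∀ i, ∀ f ∈ Y.comp i, motive f) (f : Y.R) : motive f := by
  obtain ⟨F, rfl⟩ := Ideal.Quotient.mk_surjective f
  rw [← sum_homogeneousComponent F, map_sum]
  refine Finset.sum_induction _ _ add zero fun d _ => ?_
  exact mem d _ ⟨_, homogeneousComponent_isHomogeneous d F, rfl⟩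

instance finite_comp (i : ℕ) : Module.Finite K (Y.comp i) :=
  Module.Finite.iff_fg.2 ((homogeneousSubmodule_fg _ _ i).map _)

variable {Y}

lemma AvoidsInfinity.dehom_injOn (hY : Y.AvoidsInfinity) (i : ℕ) :
    Set.InjOn Y.dehom (Y.comp i) := by
  intro f hf g hg h
  obtain ⟨F, hF, hFg⟩ := sub_mem hf hg
  have h0 : Y.dehom (f - g) = 0 := by rw [map_sub, h, sub_self]
  rw [← sub_eq_zero]
  rw [← hFg] at h0 ⊢
  exact Ideal.Quotient.eq_zero_iff_mem.2
    (hY.mem_ideal_of_isHomogeneous hF (Ideal.Quotient.eq_zero_iff_mem.1 h0))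

variable (Y)

/-- The image `F_i` of `R_i` in `R / ⟨x_0 - 1⟩`; it is zero for `i < 0`. -/
def fil (i : ℤ) : Submodule K Y.Gamma :=
  if 0 ≤ i then (Y.comp i.toNat).map Y.dehomₐ.toLinearMap else ⊥

lemma fil_natCast (i : ℕ) : Y.fil i = (Y.comp i).map Y.dehomₐ.toLinearMap := by
  simp [fil]

lemma fil_of_neg {i : ℤ} (hi : i < 0) : Y.fil i = ⊥ := by
  simp [fil, hi]

lemma mem_fil_natCast {i : ℕ} {a : Y.Gamma} : a ∈ Y.fil i ↔ ∃ f ∈ Y.comp i, Y.dehom f = a := by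
  rw [fil_natCast]; rfl

lemma fil_mono : Monotone Y.fil := by
  intro i j hij
  rcases lt_or_ge i 0 with hi | hi
  · rw [Y.fil_of_neg hi]; exact bot_le
  · lift i to ℕ using hi
    lift j to ℕ using (Int.natCast_nonneg i).trans hij
    intro a ha
    obtain ⟨f, hf, rfl⟩ := Y.mem_fil_natCast.1 ha
    obtain ⟨k, rfl⟩ := Nat.exists_eq_add_of_le (Int.ofNat_le.1 hij)
    exact Y.mem_fil_natCast.2 ⟨f * Y.x0 ^ k, Y.mul_mem_comp hf (Y.x0_pow_mem_comp k), by simp⟩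

variable {Y}

lemma AvoidsInfinity.finrank_comp (hY : Y.AvoidsInfinity) (i : ℕ) :
    Module.finrank K (Y.comp i) = Module.finrank K (Y.fil i) := by
  rw [fil_natCast, ← LinearMap.range_domRestrict]
  exact (LinearMap.finrank_range_of_inj fun f g h =>
    Subtype.ext (hY.dehom_injOn i f.2 g.2 h)).symm

lemma AvoidsInfinity.exists_fil_eq_top (hY : Y.AvoidsInfinity) :
    ∃ N : ℕ, ∀ i : ℤ, (N : ℤ) ≤ i → Y.fil i = ⊤ := by
  obtain ⟨N, hN⟩ := hY.exists_pow_le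
  have hstep : ∀ i : ℕ, N ≤ i → Y.fil (i + 1 : ℕ) ≤ Y.fil i := by
    intro i hi a ha
    obtain ⟨_, ⟨F, hF, rfl⟩, rfl⟩ := Y.mem_fil_natCast.1 ha
    have hFN : F ∈ idealOfVars (Fin (n + 1)) K ^ N := by
      rw [mem_pow_idealOfVars_iff]
      intro m hm
      have := hF.degree_eq_sum_deg_support hm
      have h2 : m.degree = ∑ i ∈ m.support, m i := rfl
      omega
    obtain ⟨A, hA, B, hB, hAB⟩ := Submodule.mem_sup.1 (hN hFN)
    obtain ⟨G, rfl⟩ := Ideal.mem_span_singleton'.1 hB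
    have h1 : F = homogeneousComponent (i + 1) A + homogeneousComponent i G * X 0 := by
      have h2 := congrArg (homogeneousComponent (i + 1)) hAB
      rw [map_add, homogeneousComponent_eq_self hF] at h2
      rw [← h2]
      rw [homogeneousComponent_mul_X]
    refine Y.mem_fil_natCast.2
      ⟨Ideal.Quotient.mk _ (homogeneousComponent i G),
        ⟨_, homogeneousComponent_isHomogeneous i G, rfl⟩, ?_⟩
    change _ = Y.dehom (Ideal.Quotient.mk _ F)
    rw [h1, map_add, map_mul, Ideal.Quotient.eq_zero_iff_mem.2 (Y.homogeneousComponent_mem hA _),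
      zero_add, map_mul]
    change _ = _ * Y.dehom Y.x0
    rw [dehom_x0, mul_one]
  have hle : ∀ k : ℕ, Y.fil (N + k : ℕ) ≤ Y.fil N := by
    intro k
    induction k with
    | zero => rfl
    | succ k ih => exact (hstep (N + k) (Nat.le_add_right _ _)).trans ih
  have htop : Y.fil N = ⊤ := by
    rw [eq_top_iff]
    rintro a -
    obtain ⟨f, rfl⟩ := Y.dehom_surjective a
    induction f using Y.comp_induction with
    | add f g hf hg => rw [map_add]; exact add_mem hf hg
    | zero => rw [map_zero]; exact zero_mem _
    | mem i f hf =>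
      exact hle i (Y.fil_mono (by simp) (Y.mem_fil_natCast.2 ⟨f, hf, rfl⟩))
  exact ⟨N, fun i hi => top_le_iff.1 (htop ▸ Y.fil_mono hi)⟩

lemma AvoidsInfinity.finite_Gamma (hY : Y.AvoidsInfinity) : Module.Finite K Y.Gamma := by
  obtain ⟨N, hN⟩ := hY.exists_fil_eq_top
  have h := hN N le_rfl
  rw [fil_natCast] at h
  exact ⟨h ▸ (Module.Finite.iff_fg.1 (Y.finite_comp N)).map _⟩

end ProjSubscheme

/-- Laurent polynomials over a commutative ring. -/
abbrev CommLaurent (A : Type*) [CommRing A] : Type _ := LaurentPolynomial A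

/-- The constants of `A[T;T⁻¹]`. -/
abbrev CommLaurent.C {A : Type*} [CommRing A] : A →+* CommLaurent A := LaurentPolynomial.C

lemma CommLaurent.coeff_C_mul_T {A : Type*} [CommRing A] (a : A) (i k : ℤ) :
    (CommLaurent.C a * LaurentPolynomial.T i).coeff k = if i = k then a else 0 := by
  rw [CommLaurent.C, ← LaurentPolynomial.single_eq_C_mul_T]
  exact Finsupp.single_apply

lemma CommLaurent.coeff_C_mul {A : Type*} [CommRing A] (a : A) (p : CommLaurent A) (k : ℤ) :
    (CommLaurent.C a * p).coeff k = a * p.coeff k := by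
  rw [CommLaurent.C, ← LaurentPolynomial.smul_eq_C_mul]
  simp

lemma CommLaurent.coeff_C_mul_T_mul {A : Type*} [CommRing A] (a : A) (i : ℤ) (p : CommLaurent A)
    (k : ℤ) : (CommLaurent.C a * LaurentPolynomial.T i * p).coeff k = a * p.coeff (k - i) := by
  rw [CommLaurent.C, ← LaurentPolynomial.single_eq_C_mul_T]
  exact AddMonoidAlgebra.coeff_single_mul_eq_mul_coeff (k - i) fun m _ => by omega

lemma CommLaurent.C_smul {B A : Type*} [CommRing B] [CommRing A] [Algebra B A] (b : B) (a : A) :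
    CommLaurent.C (b • a) = b • CommLaurent.C a := by
  rw [Algebra.smul_def, Algebra.smul_def, map_mul, LaurentPolynomial.algebraMap_apply]

lemma CommLaurent.eval₂_smul {B A : Type*} [CommRing B] [CommRing A] [Algebra B A] (b : B)
    (x : Aˣ) (p : CommLaurent A) :
    LaurentPolynomial.eval₂ (RingHom.id A) x (b • p) =
      b • LaurentPolynomial.eval₂ (RingHom.id A) x p := by
  rw [Algebra.smul_def, Algebra.smul_def, map_mul, LaurentPolynomial.algebraMap_apply,
    LaurentPolynomial.eval₂_C, RingHom.id_apply]

/-- `T` as a unit of `A[T;T⁻¹]`. -/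
def CommLaurent.unitT (A : Type*) [CommRing A] : (CommLaurent A)ˣ :=
  ⟨LaurentPolynomial.T 1, LaurentPolynomial.T (-1), by rw [← LaurentPolynomial.T_add]; simp,
    by rw [← LaurentPolynomial.T_add]; simp⟩

lemma CommLaurent.unitT_zpow (A : Type*) [CommRing A] (k : ℤ) :
    ((CommLaurent.unitT A ^ k : (CommLaurent A)ˣ) : CommLaurent A) = LaurentPolynomial.T k := by
  cases k with
  | ofNat m => simp [unitT, LaurentPolynomial.T_pow]
  | negSucc m =>
    rw [zpow_negSucc, ← inv_pow]
    change (LaurentPolynomial.T (-1) : CommLaurent A) ^ (m + 1) = _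
    rw [LaurentPolynomial.T_pow, Int.negSucc_eq]
    simp

namespace ProjSubscheme

open LaurentPolynomial hiding C

variable {K : Type u} [Field K] {n : ℕ} (Y : ProjSubscheme K n)

lemma deg_eq_finrank [Module.Finite K Y.Gamma] : Y.deg = Module.finrank K Y.Gamma := by
  classical
  have : IsArtinianRing Y.Gamma := IsArtinianRing.of_finite K Y.Gamma
  have : Fintype Y.Pt := Fintype.ofFinite _
  have (p : Y.Pt) : Module.Finite K (Y.O p) :=
    Module.Finite.of_surjective (Algebra.algHom K Y.Gamma (Y.O p)).toLinearMap
      (IsArtinianRing.localization_surjective p.asIdeal.primeCompl (Y.O p))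
  have (p : Y.Pt) : Module.Free K (Y.O p) := inferInstance
  rw [deg, finsum_eq_sum_of_fintype]
  exact (((MaximalSpectrum.toPiLocalizationEquiv Y.Gamma).restrictScalars
    K).toLinearEquiv.finrank_eq.trans (Module.finrank_pi_fintype K (M := Y.O))).symm

/-- The embedding `R → Γ[T;T⁻¹]` of the coordinate ring as a Rees algebra: it maps `f ∈ R_i` to
`f(1, x_1, …, x_n) T^i`. -/
def toLaurent : Y.R →ₐ[K] CommLaurent Y.Gamma :=
  Ideal.Quotient.liftₐ Y.ideal
    (aeval fun i => CommLaurent.C (Ideal.Quotient.mk _ (X i) : Y.Gamma) * T 1) (by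
      intro F hF
      refine Y.map_eq_zero_of_homogeneous (aeval fun i =>
        CommLaurent.C (Ideal.Quotient.mk _ (X i) : Y.Gamma) * T 1 :
          _ →ₐ[K] CommLaurent Y.Gamma).toRingHom ?_ hF
      intro d G hG hd
      refine (hd.aeval_mul_right _ _).trans ?_
      have h2 : aeval (fun i => CommLaurent.C (Ideal.Quotient.mk _ (X i) : Y.Gamma)) =
          ((IsScalarTower.toAlgHom K Y.Gamma (CommLaurent Y.Gamma)).comp
            (Ideal.Quotient.mkₐ K (Y.ideal ⊔ Ideal.span {X 0 - 1}))) := by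
        ext i; simp
      rw [h2, AlgHom.comp_apply, Ideal.Quotient.mkₐ_eq_mk,
        Ideal.Quotient.eq_zero_iff_mem.2 (Ideal.mem_sup_left hG), map_zero, zero_mul])

lemma toLaurent_of_mem {i : ℕ} {f : Y.R} (hf : f ∈ Y.comp i) :
    Y.toLaurent f = CommLaurent.C (Y.dehom f) * T i := by
  obtain ⟨F, hF, rfl⟩ := hf
  have h2 : aeval (fun i => CommLaurent.C (Ideal.Quotient.mk _ (X i) : Y.Gamma)) =
      ((IsScalarTower.toAlgHom K Y.Gamma (CommLaurent Y.Gamma)).comp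
        (Ideal.Quotient.mkₐ K (Y.ideal ⊔ Ideal.span {X 0 - 1}))) := by
    ext i; simp
  refine (hF.aeval_mul_right _ _).trans ?_
  rw [h2, T_pow, mul_one]
  rfl

lemma toLaurent_x0 : Y.toLaurent Y.x0 = T 1 := by
  rw [Y.toLaurent_of_mem Y.x0_mem_comp]; simp

lemma coeff_toLaurent_mem (f : Y.R) (k : ℤ) : (Y.toLaurent f).coeff k ∈ Y.fil k := by
  induction f using Y.comp_induction with
  | add f g hf hg => simpa using add_mem hf hg
  | zero => simp
  | mem i f hf =>
    rw [Y.toLaurent_of_mem hf, CommLaurent.coeff_C_mul_T]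
    by_cases h : (i : ℤ) = k
    · subst h
      simpa only [if_true] using Y.mem_fil_natCast.2 ⟨f, hf, rfl⟩
    · simp [h]

lemma mem_range_toLaurent {p : CommLaurent Y.Gamma} (hp : ∀ k, p.coeff k ∈ Y.fil k) :
    ∃ f, Y.toLaurent f = p := by
  have h : p ∈ Y.toLaurent.range := by
    have h1 : p = ∑ k ∈ p.coeff.support, CommLaurent.C (p.coeff k) * T k := by
      ext j
      simp [CommLaurent.coeff_C_mul_T]
    rw [h1]
    refine sum_mem fun k hk => ?_
    have hk0 := Finsupp.mem_support_iff.1 hk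
    have hk1 : 0 ≤ k := by
      by_contra! h
      have := hp k
      rw [Y.fil_of_neg h] at this
      exact hk0 this
    lift k to ℕ using hk1
    obtain ⟨f, hf, hfk⟩ := Y.mem_fil_natCast.1 (hp k)
    exact ⟨f, by rw [← hfk]; exact Y.toLaurent_of_mem hf⟩
  exact h

variable {Y}

lemma AvoidsInfinity.toLaurent_injective (hY : Y.AvoidsInfinity) :
    Function.Injective Y.toLaurent := by
  rw [injective_iff_map_eq_zero]
  intro f hf
  obtain ⟨F, rfl⟩ := Ideal.Quotient.mk_surjective f
  have hsum : Ideal.Quotient.mk Y.ideal F = ∑ i ∈ Finset.range (F.totalDegree + 1),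
      Ideal.Quotient.mk Y.ideal (homogeneousComponent i F) := by
    rw [← map_sum, sum_homogeneousComponent]
  have hmem : ∀ i, Ideal.Quotient.mk Y.ideal (homogeneousComponent i F) ∈ Y.comp i :=
    fun i => ⟨_, homogeneousComponent_isHomogeneous i F, rfl⟩
  rw [hsum]
  refine Finset.sum_eq_zero fun i hi => hY.dehom_injOn i (hmem i) (zero_mem _) ?_
  rw [hsum, map_sum] at hf
  have := congrArg (fun p => p.coeff (i : ℤ)) hf
  simpa [Y.toLaurent_of_mem (hmem _), CommLaurent.coeff_C_mul_T, hi] using this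

end ProjSubscheme

namespace ZeroDimScheme

open LaurentPolynomial hiding C

variable {K : Type u} [Field K] {n : ℕ} (S : ZeroDimScheme K n)

lemma avoidsInfinity : S.AvoidsInfinity := S.not_at_infinity

instance finite_Gamma : Module.Finite K S.Gamma := S.avoidsInfinity.finite_Gamma

instance isArtinianRing_Gamma : IsArtinianRing S.Gamma := IsArtinianRing.of_finite K S.Gamma

lemma HF_eq_deg_iff (i : ℕ) : S.HF i = S.deg ↔ S.fil i = ⊤ := by
  rw [HF, S.avoidsInfinity.finrank_comp, S.deg_eq_finrank]
  exact ⟨Submodule.eq_top_of_finrank_eq, fun h => by rw [h, finrank_top]⟩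

lemma fil_rX : S.fil S.rX = ⊤ := by
  obtain ⟨N, hN⟩ := S.avoidsInfinity.exists_fil_eq_top
  have h : S.rX ∈ {r : ℕ | ∀ i, r ≤ i → S.HF i = S.deg} :=
    Nat.sInf_mem ⟨N, fun i hi => (S.HF_eq_deg_iff i).2 (hN i (Int.ofNat_le.2 hi))⟩
  exact (S.HF_eq_deg_iff _).1 (h _ le_rfl)

lemma mem_fil_of_rX_le {i : ℤ} (hi : (S.rX : ℤ) ≤ i) (a : S.Gamma) : a ∈ S.fil i :=
  S.fil_mono hi (S.fil_rX ▸ Submodule.mem_top)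

lemma isUnit_dehom {g : S.R} (hg : g ∈ S.homNZD) : IsUnit (S.dehom g) := by
  obtain ⟨hg, b, hb⟩ := hg
  refine IsArtinianRing.isUnit_of_mem_nonZeroDivisors (mem_nonZeroDivisors_iff_left.2 ?_)
  intro a ha
  obtain ⟨f, hf, rfl⟩ := S.mem_fil_natCast.1 (S.mem_fil_of_rX_le le_rfl a)
  have h0 : g * f = 0 := S.avoidsInfinity.dehom_injOn (b + S.rX) (S.mul_mem_comp hb hf)
    (zero_mem _) (by rw [map_mul, ha, map_zero])
  rw [(mem_nonZeroDivisors_iff_left.1 hg) f h0, map_zero]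

lemma isUnit_toLaurent (g : S.homNZD) : IsUnit (S.toLaurent g) := by
  obtain ⟨b, hb⟩ := g.2.2
  rw [S.toLaurent_of_mem hb]
  exact ((S.isUnit_dehom g.2).map _).mul (isUnit_T _)

/-- The extension of `R → Γ[T;T⁻¹]` to `Q^h(R)`. -/
def thetaHom : S.Q →ₐ[K] CommLaurent S.Gamma :=
  { IsLocalization.lift (M := S.homNZD) (S := S.Q) (g := S.toLaurent.toRingHom)
      S.isUnit_toLaurent with
    commutes' := fun c => by
      change IsLocalization.lift (M := S.homNZD) (S := S.Q) (g := S.toLaurent.toRingHom)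
        S.isUnit_toLaurent (algebraMap K S.Q c) = _
      rw [IsScalarTower.algebraMap_apply K S.R S.Q, IsLocalization.lift_eq]
      exact S.toLaurent.commutes c }

@[simp]
lemma thetaHom_algebraMap (f : S.R) : S.thetaHom (algebraMap S.R S.Q f) = S.toLaurent f :=
  IsLocalization.lift_eq _ f

lemma coe_x0Q : (S.x0Q : S.Q) = algebraMap S.R S.Q S.x0 := rfl

@[simp]
lemma thetaHom_x0Q_zpow (k : ℤ) : S.thetaHom ((S.x0Q ^ k : S.Qˣ) : S.Q) = T k := by
  have h : Units.map (S.thetaHom : S.Q →* CommLaurent S.Gamma) S.x0Q =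
      CommLaurent.unitT S.Gamma := by
    ext : 1
    change S.thetaHom S.x0Q = T 1
    rw [coe_x0Q, thetaHom_algebraMap, S.toLaurent_x0]
  rw [← CommLaurent.unitT_zpow, ← h, ← map_zpow]
  rfl

lemma thetaHom_bijective : Function.Bijective S.thetaHom := by
  constructor
  · rw [injective_iff_map_eq_zero]
    intro q hq
    obtain ⟨f, g, rfl⟩ := IsLocalization.exists_mk'_eq S.homNZD q
    have h : S.thetaHom (algebraMap S.R S.Q f) = 0 := by
      rw [← IsLocalization.mk'_spec S.Q f g, map_mul, hq, zero_mul]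
    rw [thetaHom_algebraMap] at h
    rw [S.avoidsInfinity.toLaurent_injective (h.trans (map_zero _).symm), IsLocalization.mk'_zero]
  · intro p
    induction p using LaurentPolynomial.induction_on' with
    | add p q hp hq =>
      obtain ⟨a, rfl⟩ := hp
      obtain ⟨b, rfl⟩ := hq
      exact ⟨a + b, map_add _ _ _⟩
    | C_mul_T k a =>
      obtain ⟨f, hf, rfl⟩ := S.mem_fil_natCast.1 (S.mem_fil_of_rX_le le_rfl a)
      refine ⟨algebraMap S.R S.Q f * ((S.x0Q ^ (k - S.rX) : S.Qˣ) : S.Q), ?_⟩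
      rw [map_mul, thetaHom_algebraMap, thetaHom_x0Q_zpow, S.toLaurent_of_mem hf, mul_assoc,
        ← T_add]
      simp

/-- The isomorphism `Q^h(R) ≅ Γ[T;T⁻¹]`. -/
def theta : S.Q ≃ₐ[K] CommLaurent S.Gamma := AlgEquiv.ofBijective S.thetaHom S.thetaHom_bijective

@[simp]
lemma theta_algebraMap (f : S.R) : S.theta (algebraMap S.R S.Q f) = S.toLaurent f :=
  S.thetaHom_algebraMap f

@[simp]
lemma theta_x0Q_zpow (k : ℤ) : S.theta ((S.x0Q ^ k : S.Qˣ) : S.Q) = T k :=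
  S.thetaHom_x0Q_zpow k

lemma mem_range_algebraMap_iff {q : S.Q} :
    q ∈ Set.range (algebraMap S.R S.Q) ↔ ∀ k, (S.theta q).coeff k ∈ S.fil k := by
  constructor
  · rintro ⟨f, rfl⟩ k
    rw [theta_algebraMap]
    exact S.coeff_toLaurent_mem f k
  · intro h
    obtain ⟨f, hf⟩ := S.mem_range_toLaurent h
    exact ⟨f, S.theta.injective (by rw [theta_algebraMap, hf])⟩

lemma theta_of_mem_compQ {i : ℤ} {q : S.Q} (hq : q ∈ S.compQ i) :
    ∃ a, S.theta q = CommLaurent.C a * T i := by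
  obtain ⟨a, b, f, g, hf, hg, rfl, rfl⟩ := hq
  obtain ⟨c, hc⟩ := (S.isUnit_dehom g.2).exists_right_inv
  refine ⟨S.dehom f * c, ?_⟩
  have h1 : S.theta (Localization.mk f g) * S.theta (algebraMap S.R S.Q g) =
      S.theta (algebraMap S.R S.Q f) := by
    rw [← map_mul, Localization.mk_eq_mk', IsLocalization.mk'_spec]
  rw [theta_algebraMap, theta_algebraMap, S.toLaurent_of_mem hf, S.toLaurent_of_mem hg] at h1
  have h2 : (CommLaurent.C (S.dehom g) * T b : CommLaurent S.Gamma) *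
      (CommLaurent.C c * T (-b)) = 1 := by
    rw [mul_mul_mul_comm, ← map_mul, hc, ← T_add]
    simp
  calc S.theta (Localization.mk f g)
      = S.theta (Localization.mk f g) * ((CommLaurent.C (S.dehom g) * T b) *
          (CommLaurent.C c * T (-b))) := by rw [h2, mul_one]
    _ = _ := by
      rw [← mul_assoc, h1, mul_mul_mul_comm, ← map_mul, ← T_add]
      rfl

lemma mul_mem_compQ {i : ℕ} {f : S.R} (hf : f ∈ S.comp i) (k : ℤ) :
    ((S.x0Q ^ k : S.Qˣ) : S.Q) * algebraMap S.R S.Q f ∈ S.compQ (k + i) := by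
  let g : S.homNZD := ⟨S.x0, S.x0_mem_homNZD⟩ ^ (-k).toNat
  have hg : (g : S.R) = S.x0 ^ (-k).toNat := rfl
  refine ⟨k.toNat + i, (-k).toNat, S.x0 ^ k.toNat * f, g,
    S.mul_mem_comp (S.x0_pow_mem_comp _) hf, hg ▸ S.x0_pow_mem_comp _, by omega, ?_⟩
  rw [Localization.mk_eq_mk', eq_comm, IsLocalization.mk'_eq_iff_eq_mul, hg]
  have h1 : ∀ m : ℕ, algebraMap S.R S.Q (S.x0 ^ m) = ((S.x0Q ^ (m : ℤ) : S.Qˣ) : S.Q) := by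
    intro m; rw [map_pow, ← coe_x0Q, zpow_natCast, Units.val_pow_eq_pow_val]
  have h2 : (k.toNat : ℤ) = k + (-k).toNat := by omega
  rw [map_mul, h1, h1, h2, zpow_add, Units.val_mul]
  ring

lemma theta_symm_C_mem_compQ (a : S.Gamma) :
    S.theta.symm (CommLaurent.C a) ∈ S.compQ 0 := by
  obtain ⟨f, hf, rfl⟩ := S.mem_fil_natCast.1 (S.mem_fil_of_rX_le le_rfl a)
  have h := S.mul_mem_compQ hf (-S.rX)
  rw [neg_add_cancel] at h
  convert h using 1
  rw [AlgEquiv.symm_apply_eq, map_mul, theta_algebraMap, theta_x0Q_zpow, S.toLaurent_of_mem hf,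
    mul_left_comm, ← T_add]
  simp

/-- The map `Γ[T;T⁻¹] → Γ`, `T ↦ 1`. -/
def evalOne : CommLaurent S.Gamma →+* S.Gamma := LaurentPolynomial.eval₂ (RingHom.id _) 1

lemma evalOne_C_mul_T (a : S.Gamma) (k : ℤ) :
    S.evalOne (CommLaurent.C a * T k) = a := by
  rw [evalOne, LaurentPolynomial.eval₂_C_mul_T]; simp

lemma evalOne_theta_mem_bot {q : S.Q} (hq : q ∈ S.L0) :
    S.evalOne (S.theta q) ∈ (⊥ : Subalgebra K S.Gamma) := by
  have hT : ∀ k : ℤ, S.evalOne (T k) = 1 := fun k => by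
    simpa using S.evalOne_C_mul_T 1 k
  induction hq using Algebra.adjoin_induction with
  | mem x hx =>
    rcases hx with rfl | rfl
    · have := S.theta_x0Q_zpow 1
      rw [zpow_one] at this
      rw [this, hT]; exact one_mem _
    · have := S.theta_x0Q_zpow (-1)
      rw [zpow_neg_one] at this
      rw [this, hT]; exact one_mem _
  | algebraMap c =>
    rw [AlgEquiv.commutes, LaurentPolynomial.algebraMap_apply]
    have := S.evalOne_C_mul_T (algebraMap K S.Gamma c) 0
    rw [T_zero, mul_one] at this
    rw [this]
    exact Subalgebra.algebraMap_mem _ c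
  | add x y _ _ hx hy => rw [map_add, map_add]; exact add_mem hx hy
  | mul x y _ _ hx hy => rw [map_mul, map_mul]; exact mul_mem hx hy

lemma theta_mem_L0_of_mem_compQ {i : ℤ} {q : S.Q} (hq : q ∈ S.compQ i) (hq' : q ∈ S.L0) :
    ∃ c : K, S.theta q = CommLaurent.C (algebraMap K S.Gamma c) * T i := by
  obtain ⟨a, ha⟩ := S.theta_of_mem_compQ hq
  have h := S.evalOne_theta_mem_bot hq'
  rw [ha, evalOne_C_mul_T] at h
  obtain ⟨c, rfl⟩ := Algebra.mem_bot.1 h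
  exact ⟨c, ha⟩

lemma x0Q_zpow_mem_L0 (k : ℤ) : ((S.x0Q ^ k : S.Qˣ) : S.Q) ∈ S.L0 := by
  cases k with
  | ofNat m =>
    rw [Int.ofNat_eq_natCast, zpow_natCast, Units.val_pow_eq_pow_val]
    exact pow_mem (Algebra.subset_adjoin (by simp)) m
  | negSucc m =>
    rw [zpow_negSucc, ← inv_pow, Units.val_pow_eq_pow_val]
    exact pow_mem (Algebra.subset_adjoin (by simp)) _

/-- Under `Q^h(R) ≅ Γ[T;T⁻¹]`, a homogeneous trace map of degree zero is the extension of a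
non-degenerate linear form on `Γ`. -/
lemma IsHomogeneousTraceMap.exists_linearForm {S : ZeroDimScheme K n}
    [Nontrivial S.Gamma] {σ : S.Q →ₗ[S.L0] S.L0} (hσ : S.IsHomogeneousTraceMap σ) :
    ∃ τ : S.Gamma →ₗ[K] K,
      (∀ (q : S.Q) (k : ℤ), (S.theta (σ q : S.Q)).coeff k =
        algebraMap K S.Gamma (τ ((S.theta q).coeff k))) ∧
      ∀ a, (∀ b, τ (a * b) = 0) → a = 0 := by
  obtain ⟨l, hl⟩ := (Algebra.linearMap K S.Gamma).exists_leftInverse_of_injective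
    (LinearMap.ker_eq_bot.2 (algebraMap K S.Gamma).injective)
  let τ : S.Gamma →ₗ[K] K :=
    { toFun := fun a => l (S.evalOne (S.theta (σ (S.theta.symm (CommLaurent.C a)) : S.Q)))
      map_add' := fun a b => by simp only [map_add, Subalgebra.coe_add]
      map_smul' := fun c a => by
        have h1 : CommLaurent.C (c • a) = c • CommLaurent.C a :=
          CommLaurent.C_smul c a
        have h2 : ∀ x : CommLaurent S.Gamma, S.evalOne (c • x) = c • S.evalOne x :=
          CommLaurent.eval₂_smul c 1
        rw [h1, map_smul, ← IsScalarTower.algebraMap_smul S.L0 c, map_smul,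
          IsScalarTower.algebraMap_smul]
        simp [h2] }
  have hC : ∀ a, S.theta (σ (S.theta.symm (CommLaurent.C a)) : S.Q) =
      CommLaurent.C (algebraMap K S.Gamma (τ a)) := by
    intro a
    obtain ⟨c, hc⟩ := S.theta_mem_L0_of_mem_compQ
      (hσ.degree_zero 0 _ (S.theta_symm_C_mem_compQ a)) (σ _).2
    have : τ a = c := by
      change l (S.evalOne (S.theta (σ (S.theta.symm (CommLaurent.C a)) : S.Q))) = c
      rw [hc, evalOne_C_mul_T]
      exact LinearMap.congr_fun hl c
    rw [this, hc, T_zero, mul_one]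
  have hτ : ∀ (q : S.Q) (k : ℤ), (S.theta (σ q : S.Q)).coeff k =
        algebraMap K S.Gamma (τ ((S.theta q).coeff k)) := by
    intro q k
    obtain ⟨p, rfl⟩ := S.theta.symm.surjective q
    induction p using LaurentPolynomial.induction_on' with
    | add p q hp hq =>
      simp only [map_add, Subalgebra.coe_add, AddMonoidAlgebra.coeff_add, Finsupp.add_apply, hp, hq]
    | C_mul_T i a =>
      let c : S.L0 := ⟨_, S.x0Q_zpow_mem_L0 i⟩
      have h1 : S.theta.symm (CommLaurent.C a * T i) =
          c • S.theta.symm (CommLaurent.C a) := by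
        rw [AlgEquiv.symm_apply_eq]
        change _ = S.theta (((S.x0Q ^ i : S.Qˣ) : S.Q) * _)
        rw [map_mul, theta_x0Q_zpow, AlgEquiv.apply_symm_apply, mul_comm]
      have h2 : (σ (S.theta.symm (CommLaurent.C a * T i)) : S.Q) =
          ((S.x0Q ^ i : S.Qˣ) : S.Q) * σ (S.theta.symm (CommLaurent.C a)) := by
        rw [h1, map_smul]; rfl
      rw [h2, map_mul, theta_x0Q_zpow, hC, AlgEquiv.apply_symm_apply, mul_comm,
        CommLaurent.coeff_C_mul_T, CommLaurent.coeff_C_mul_T]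
      split_ifs <;> simp
  refine ⟨τ, hτ, fun a ha => ?_⟩
  have h0 : S.theta.symm (CommLaurent.C a) = 0 := by
    apply hσ.basis.1
    ext q
    change (σ _ : S.Q) = (σ (0 * q) : S.Q)
    apply S.theta.injective
    ext k
    rw [hτ, hτ]
    rw [map_mul, AlgEquiv.apply_symm_apply, CommLaurent.coeff_C_mul, ha, zero_mul, map_zero]
    simp
  have := congrArg S.theta h0
  rw [AlgEquiv.apply_symm_apply, map_zero] at this
  simpa [this] using (S.evalOne_C_mul_T a 0).symm

end ZeroDimScheme

/-- Let `τ` be a non-degenerate linear form on a finite-dimensional algebra.  A minimal ideal `I`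
with `I · F^⊥ ⊆ F` is contained in `F`. -/
lemma Ideal.subset_of_mul_orthogonal_subset {K A : Type*} [Field K] [CommRing A] [Algebra K A]
    [Module.Finite K A] {τ : A →ₗ[K] K} (hτ : ∀ a, (∀ b, τ (a * b) = 0) → a = 0)
    {I : Ideal A} (hI : ∀ b ∈ I, b ≠ 0 → ∀ x ∈ I, ∃ c, x = c * b) {F : Submodule K A}
    (h : ∀ b ∈ I, ∀ a, (∀ f ∈ F, τ (a * f) = 0) → b * a ∈ F) {x : A} (hx : x ∈ I) : x ∈ F := by
  by_cases h0 : ∃ b ∈ I, ∃ a, (∀ f ∈ F, τ (a * f) = 0) ∧ b * a ≠ 0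
  · obtain ⟨b, hb, a, ha, hba⟩ := h0
    obtain ⟨c, rfl⟩ := hI (b * a) (I.mul_mem_right a hb) hba x hx
    rw [← mul_assoc]
    exact h _ (I.mul_mem_left c hb) a ha
  · push Not at h0
    let B : LinearMap.BilinForm K A := (LinearMap.mul K A).compr₂ τ
    have hB : ∀ a b, B a b = τ (a * b) := fun _ _ => rfl
    have hsymm : B.IsRefl := fun a b hab => by rw [hB, mul_comm]; exact hab
    have hnd : B.Nondegenerate := by
      refine ⟨fun a ha => hτ a ha, fun a ha => hτ a fun b => ?_⟩
      rw [mul_comm]; exact ha b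
    rw [← LinearMap.BilinForm.orthogonal_orthogonal hnd hsymm F]
    intro a ha
    change τ (a * x) = 0
    rw [mul_comm, h0 x hx a fun f hf => ?_, map_zero]
    rw [mul_comm]
    exact ha f hf

namespace ZeroDimScheme

open LaurentPolynomial hiding C

variable {K : Type u} [Field K] {n : ℕ} (S : ZeroDimScheme K n)

lemma algebraMap_injective : Function.Injective (algebraMap S.R S.Q) := by
  intro f g h
  apply S.avoidsInfinity.toLaurent_injective
  rw [← theta_algebraMap, ← theta_algebraMap, h]

lemma algebraMap_mem_L0 {f : S.R} (hf : f ∈ S.Kx0) : algebraMap S.R S.Q f ∈ S.L0 := by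
  induction hf using Algebra.adjoin_induction with
  | mem x hx => rw [Set.mem_singleton_iff.1 hx]; exact Algebra.subset_adjoin (by simp [coe_x0Q])
  | algebraMap c =>
    rw [← IsScalarTower.algebraMap_apply K S.R S.Q]; exact Subalgebra.algebraMap_mem _ c
  | add x y _ _ hx hy => rw [map_add]; exact add_mem hx hy
  | mul x y _ _ hx hy => rw [map_mul]; exact mul_mem hx hy

lemma exists_mem_Kx0 {q : S.Q} (h : ∀ k, ∃ c : K, (S.theta q).coeff k = algebraMap K S.Gamma c)
    (hneg : ∀ k < 0, (S.theta q).coeff k = 0) :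
    ∃ f : S.Kx0, algebraMap S.R S.Q f = q := by
  choose c hc using h
  refine ⟨∑ k ∈ (S.theta q).coeff.support, algebraMap K S.Kx0 (c k) *
    ⟨S.x0, Algebra.subset_adjoin rfl⟩ ^ k.toNat, S.theta.injective ?_⟩
  rw [theta_algebraMap]
  ext j
  have h1 : ∀ k ∈ (S.theta q).coeff.support,
      S.toLaurent ((algebraMap K S.R (c k)) * S.x0 ^ k.toNat) =
        CommLaurent.C ((S.theta q).coeff k) * T k := by
    intro k hk
    have hk0 : 0 ≤ k := by
      by_contra! hlt
      exact (Finsupp.mem_support_iff.1 hk) (hneg k hlt)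
    rw [map_mul, map_pow, S.toLaurent_x0, T_pow, AlgHom.commutes,
      LaurentPolynomial.algebraMap_apply, hc, mul_one, Int.toNat_of_nonneg hk0]
  have h2 : S.toLaurent ((∑ k ∈ (S.theta q).coeff.support, algebraMap K S.Kx0 (c k) *
      ⟨S.x0, Algebra.subset_adjoin rfl⟩ ^ k.toNat : S.Kx0) : S.R) =
      ∑ k ∈ (S.theta q).coeff.support, CommLaurent.C ((S.theta q).coeff k) * T k := by
    rw [AddSubmonoidClass.coe_finsetSum, map_sum]
    exact Finset.sum_congr rfl h1
  rw [h2]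
  simp [CommLaurent.coeff_C_mul_T]

variable {S}

lemma mem_complementary_iff {σ : S.Q →ₗ[S.L0] S.L0} [Nontrivial S.Gamma] {τ : S.Gamma →ₗ[K] K}
    (hτ : ∀ (q : S.Q) (k : ℤ), (S.theta (σ q : S.Q)).coeff k =
        algebraMap K S.Gamma (τ ((S.theta q).coeff k))) {g : S.Q} :
    g ∈ S.complementary σ ↔
      ∀ f : S.R, ∀ k < 0, τ ((S.theta (g * algebraMap S.R S.Q f)).coeff k) = 0 := by
  constructor
  · rintro ⟨φ, hφ⟩ f k hk
    apply (algebraMap K S.Gamma).injective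
    rw [← hτ, map_zero]
    have h1 : (σ (g * algebraMap S.R S.Q f) : S.Q) = algebraMap S.R S.Q (φ f) := hφ f
    rw [h1, theta_algebraMap]
    have h2 := S.coeff_toLaurent_mem (φ f : S.R) k
    rw [S.fil_of_neg hk] at h2
    exact h2
  · intro h
    have hex : ∀ f : S.R, ∃ y : S.Kx0, algebraMap S.R S.Q y =
        (σ (g * algebraMap S.R S.Q f) : S.Q) :=
      fun f => S.exists_mem_Kx0 (fun k => ⟨_, hτ _ k⟩)
        fun k hk => by rw [hτ, h f k hk, map_zero]
    choose φ hφ using hex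
    refine ⟨{ toFun := φ, map_add' := fun f f' => ?_, map_smul' := fun c f => ?_ },
      fun f => (hφ f).symm⟩
    · apply Subtype.ext
      apply S.algebraMap_injective
      rw [hφ, Subalgebra.coe_add, (algebraMap S.R S.Q).map_add (φ f : S.R), hφ, hφ, map_add,
        mul_add, map_add, Subalgebra.coe_add]
    · apply Subtype.ext
      apply S.algebraMap_injective
      let c' : S.L0 := ⟨_, S.algebraMap_mem_L0 c.2⟩
      have h1 : g * algebraMap S.R S.Q (c • f) = c' • (g * algebraMap S.R S.Q f) := by
        change g * algebraMap S.R S.Q ((c : S.R) * f) = algebraMap S.R S.Q c * _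
        rw [map_mul]; ring
      rw [hφ, h1, map_smul]
      change algebraMap S.R S.Q c * _ = algebraMap S.R S.Q ((c : S.R) * (φ f : S.R))
      rw [(algebraMap S.R S.Q).map_mul (c : S.R), hφ]

variable (S)

/-- The ideal of `Γ` which defines the affine part of `Y ⊆ 𝕏`. -/
def gammaIdeal (Y : ProjSubscheme K n) : Ideal S.Gamma := (S.relIdeal Y).map S.dehom

variable {S}

lemma mk_mem_gammaIdeal_iff {Y : ProjSubscheme K n} (hY : S.ideal ≤ Y.ideal)
    {F : MvPolynomial (Fin (n + 1)) K} :
    (Ideal.Quotient.mk _ F : S.Gamma) ∈ S.gammaIdeal Y ↔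
      F ∈ Y.ideal ⊔ Ideal.span {X 0 - 1} := by
  have h : S.gammaIdeal Y = Y.ideal.map (Ideal.Quotient.mk (S.ideal ⊔ Ideal.span {X 0 - 1})) := by
    rw [gammaIdeal, relIdeal, Ideal.map_map]; rfl
  rw [h, ← Ideal.mem_comap, Ideal.comap_map_of_surjective' _ Ideal.Quotient.mk_surjective,
    Ideal.mk_ker, ← sup_assoc, sup_eq_left.2 hY]

lemma mem_relIdeal_iff {Y : ProjSubscheme K n} (hY : S.ideal ≤ Y.ideal) {i : ℕ} {f : S.R}
    (hf : f ∈ S.comp i) : f ∈ S.relIdeal Y ↔ S.dehom f ∈ S.gammaIdeal Y := by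
  refine ⟨fun h => Ideal.mem_map_of_mem _ h, fun h => ?_⟩
  obtain ⟨F, hF, rfl⟩ := hf
  exact Ideal.mem_map_of_mem _ ((S.avoidsInfinity.mono hY).mem_ideal_of_isHomogeneous hF
    ((mk_mem_gammaIdeal_iff hY).1 h))

lemma image_subset_different_iff [Nontrivial S.Gamma] {σ : S.Q →ₗ[S.L0] S.L0}
    (hσ : S.IsHomogeneousTraceMap σ) {Y : ProjSubscheme K n} (hY : S.ideal ≤ Y.ideal)
    (hI : ∀ b ∈ S.gammaIdeal Y, b ≠ 0 → ∀ x ∈ S.gammaIdeal Y, ∃ c, x = c * b) :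
    ((fun f : S.R => ((S.x0Q ^ ((S.rX : ℤ) - 1) : S.Qˣ) : S.Q) * algebraMap S.R S.Q f) ''
            {f | f ∈ S.comp S.rX ∧ f ∈ S.relIdeal Y} ⊆
          {q | q ∈ S.different σ ∧ q ∈ S.compQ (2 * (S.rX : ℤ) - 1)}) ↔
      ∀ b ∈ S.gammaIdeal Y, b ∈ S.fil ((S.rX : ℤ) - 1) := by
  obtain ⟨τ, hτ, hnd⟩ := hσ.exists_linearForm
  have hθ : ∀ f ∈ S.comp S.rX, ∀ k : ℤ,
      S.theta (((S.x0Q ^ k : S.Qˣ) : S.Q) * algebraMap S.R S.Q f) =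
        CommLaurent.C (S.dehom f) * T (k + S.rX) := by
    intro f hf k
    rw [map_mul, theta_x0Q_zpow, theta_algebraMap, S.toLaurent_of_mem hf, mul_left_comm, ← T_add]
  constructor
  · intro h x hx
    refine Ideal.subset_of_mul_orthogonal_subset hnd hI (fun b hb a ha => ?_) hx
    obtain ⟨f, hf, rfl⟩ := S.mem_fil_natCast.1 (S.mem_fil_of_rX_le le_rfl b)
    let g := S.theta.symm (CommLaurent.C a * T (-S.rX))
    have hg : g ∈ S.complementary σ := by
      rw [mem_complementary_iff hτ]
      intro e k hk
      rw [map_mul, AlgEquiv.apply_symm_apply, theta_algebraMap]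
      have h1 : (CommLaurent.C a * T (-(S.rX : ℤ)) * S.toLaurent e).coeff k =
          a * (S.toLaurent e).coeff (k + S.rX) := by
        rw [CommLaurent.coeff_C_mul_T_mul, sub_neg_eq_add]
      rw [h1]
      exact ha _ (S.fil_mono (by omega) (S.coeff_toLaurent_mem e _))
    have h1 := (h ⟨f, ⟨hf, (mem_relIdeal_iff hY hf).2 hb⟩, rfl⟩).1 g hg
    have h2 := (S.mem_range_algebraMap_iff.1 h1) ((S.rX : ℤ) - 1)
    rw [map_mul, hθ f hf, AlgEquiv.apply_symm_apply, mul_mul_mul_comm, ← map_mul, ← T_add,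
      CommLaurent.coeff_C_mul_T, if_pos (by ring)] at h2
    exact h2
  · rintro h _ ⟨f, ⟨hf, hfY⟩, rfl⟩
    have hb : S.dehom f ∈ S.gammaIdeal Y := (mem_relIdeal_iff hY hf).1 hfY
    refine ⟨fun g hg => ?_, ?_⟩
    · rw [S.mem_range_algebraMap_iff]
      intro k
      have h1 : (S.theta (((S.x0Q ^ ((S.rX : ℤ) - 1) : S.Qˣ) : S.Q) * algebraMap S.R S.Q f
          * g)).coeff k = S.dehom f * (S.theta g).coeff (k - (2 * S.rX - 1)) := by
        rw [map_mul, hθ f hf, CommLaurent.coeff_C_mul_T_mul]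
        congr 2
        ring
      change (S.theta (((S.x0Q ^ ((S.rX : ℤ) - 1) : S.Qˣ) : S.Q) * algebraMap S.R S.Q f
          * g)).coeff k ∈ _
      rw [h1]
      rcases lt_or_ge k ((S.rX : ℤ) - 1) with hk | hk
      · have h2 : (S.theta g).coeff (k - (2 * S.rX - 1)) = 0 := by
          refine hnd _ fun b => ?_
          obtain ⟨e, he, rfl⟩ := S.mem_fil_natCast.1 (S.mem_fil_of_rX_le le_rfl b)
          have h3 := (mem_complementary_iff hτ).1 hg e (k - (S.rX - 1)) (by omega)
          rw [map_mul, theta_algebraMap, S.toLaurent_of_mem he, mul_comm (S.theta g),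
            CommLaurent.coeff_C_mul_T_mul, mul_comm] at h3
          convert h3 using 4
          ring
        rw [h2, mul_zero]
        exact zero_mem _
      · exact S.fil_mono hk (h _ (Ideal.mul_mem_right _ _ hb))
    · have := S.mul_mem_compQ hf ((S.rX : ℤ) - 1)
      convert this using 1
      ring_nf

end ZeroDimScheme

lemma IsLocalRing.residue_smul {K A : Type*} [Field K] [CommRing A] [IsLocalRing A] [Algebra K A]
    (c : K) (a : A) : IsLocalRing.residue A (c • a) = c • IsLocalRing.residue A a :=
  map_smul (IsScalarTower.toAlgHom K A (IsLocalRing.ResidueField A)) c a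

lemma IsLocalRing.finite_residueField_of_finite (K A : Type*) [Field K] [CommRing A]
    [IsLocalRing A] [Algebra K A] [Module.Finite K A] :
    Module.Finite K (IsLocalRing.ResidueField A) :=
  Module.Finite.of_surjective
    (IsScalarTower.toAlgHom K A (IsLocalRing.ResidueField A)).toLinearMap
    IsLocalRing.residue_surjective

lemma IsLocalRing.residue_eq_zero_iff_not_isUnit {A : Type*} [CommRing A] [IsLocalRing A] (a : A) :
    IsLocalRing.residue A a = 0 ↔ ¬ IsUnit a := by
  rw [IsLocalRing.residue_eq_zero_iff, IsLocalRing.mem_maximalIdeal, mem_nonunits_iff]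

lemma IsLocalRing.exists_mem_socle {A : Type*} [CommRing A] [IsLocalRing A] [IsArtinianRing A]
    {J : Ideal A} (hJ : J ≠ ⊥) :
    ∃ s ∈ J, s ≠ 0 ∧ ∀ b ∈ IsLocalRing.maximalIdeal A, b * s = 0 := by
  classical
  have hnil : ∃ k, IsLocalRing.maximalIdeal A ^ k * J = ⊥ := by
    obtain ⟨k, hk⟩ := IsArtinianRing.isNilpotent_jacobson_bot (R := A)
    rw [IsLocalRing.jacobson_eq_maximalIdeal ⊥ bot_ne_top] at hk
    exact ⟨k, by rw [hk]; simp⟩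
  obtain ⟨k, hk, hmin⟩ : ∃ k, IsLocalRing.maximalIdeal A ^ k * J = ⊥ ∧
      ∀ m < k, IsLocalRing.maximalIdeal A ^ m * J ≠ ⊥ :=
    ⟨Nat.find hnil, Nat.find_spec hnil, fun m => Nat.find_min hnil⟩
  cases k with
  | zero => exact absurd (by simpa using hk) hJ
  | succ k =>
    obtain ⟨s, hs, hs0⟩ := Submodule.exists_mem_ne_zero_of_ne_bot (hmin k k.lt_succ_self)
    refine ⟨s, Ideal.mul_le_right hs, hs0, fun b hb => ?_⟩
    have h1 : b * s ∈ IsLocalRing.maximalIdeal A * (IsLocalRing.maximalIdeal A ^ k * J) :=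
      Ideal.mul_mem_mul hb hs
    rw [← mul_assoc, ← pow_succ', hk] at h1
    exact h1

lemma IsLocalRing.finrank_range_mulRight_of_socle {K A : Type*} [Field K] [CommRing A]
    [IsLocalRing A] [Algebra K A] [Module.Finite K A] {s : A} (hs0 : s ≠ 0)
    (hs : ∀ b ∈ IsLocalRing.maximalIdeal A, b * s = 0) :
    Module.finrank K (LinearMap.range (LinearMap.mulRight K s)) =
      Module.finrank K (IsLocalRing.ResidueField A) := by
  let ρ : A →ₗ[K] IsLocalRing.ResidueField A :=
    (IsScalarTower.toAlgHom K A (IsLocalRing.ResidueField A)).toLinearMap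
  have hρ : Function.Surjective ρ := IsLocalRing.residue_surjective
  have hker : LinearMap.ker (LinearMap.mulRight K s) = LinearMap.ker ρ := by
    ext a
    have h1 : a ∈ LinearMap.ker ρ ↔ a ∈ IsLocalRing.maximalIdeal A :=
      IsLocalRing.residue_eq_zero_iff a
    rw [h1]
    refine ⟨fun ha => ?_, hs a⟩
    by_contra hna
    obtain ⟨u, rfl⟩ := not_not.1 (mt (IsLocalRing.mem_maximalIdeal a).2 hna)
    have h2 : (u : A) * s = 0 := ha
    exact hs0 (by simpa using h2)
  have h1 := LinearMap.finrank_range_add_finrank_ker (LinearMap.mulRight K s)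
  have h2 := LinearMap.finrank_range_add_finrank_ker ρ
  rw [LinearMap.range_eq_top.2 hρ, finrank_top] at h2
  rw [hker] at h1
  omega

/-- In a local algebra of finite dimension, an ideal whose dimension is that of the residue field
is generated by a socle element. -/
lemma IsLocalRing.exists_socle_generator {K A : Type*} [Field K] [CommRing A] [IsLocalRing A]
    [Algebra K A] [Module.Finite K A] {J : Ideal A} {V : Submodule K A} (hV : ∀ x, x ∈ V ↔ x ∈ J)
    (hJ : Module.finrank K V = Module.finrank K (IsLocalRing.ResidueField A)) :
    ∃ s, s ≠ 0 ∧ (∀ b ∈ IsLocalRing.maximalIdeal A, b * s = 0) ∧ J = Ideal.span {s} := by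
  have : IsArtinianRing A := IsArtinianRing.of_finite K A
  have := IsLocalRing.finite_residueField_of_finite K A
  have hJ0 : J ≠ ⊥ := by
    rintro rfl
    have h1 : 0 < Module.finrank K (IsLocalRing.ResidueField A) := Module.finrank_pos
    have h2 : V = ⊥ := (Submodule.eq_bot_iff V).2 fun x hx => (hV x).1 hx
    rw [h2, finrank_bot] at hJ
    omega
  obtain ⟨s, hsJ, hs0, hs⟩ := IsLocalRing.exists_mem_socle hJ0
  refine ⟨s, hs0, hs, ?_⟩
  have hle : LinearMap.range (LinearMap.mulRight K s) ≤ V := by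
    rintro x ⟨a, hx⟩
    rw [← hx, hV]
    exact J.mul_mem_left a hsJ
  have heq : LinearMap.range (LinearMap.mulRight K s) = V := Submodule.eq_of_le_of_finrank_eq hle
    ((IsLocalRing.finrank_range_mulRight_of_socle hs0 hs).trans hJ.symm)
  ext x
  rw [Ideal.mem_span_singleton', ← hV, ← heq]
  rfl

namespace ZeroDimScheme

variable {K : Type u} [Field K] {n : ℕ} {S : ZeroDimScheme K n}

lemma algebraMap_O_surjective (p : S.Pt) : Function.Surjective (algebraMap S.Gamma (S.O p)) :=
  IsArtinianRing.localization_surjective p.asIdeal.primeCompl (S.O p)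

instance finite_O (p : S.Pt) : Module.Finite K (S.O p) :=
  Module.Finite.of_surjective (Algebra.algHom K S.Gamma (S.O p)).toLinearMap
    (algebraMap_O_surjective p)

lemma eq_of_forall_germ_eq {a b : S.Gamma}
    (h : ∀ p : S.Pt, algebraMap S.Gamma (S.O p) a = algebraMap S.Gamma (S.O p) b) : a = b :=
  MaximalSpectrum.toPiLocalization_injective _ (funext h)

lemma finrank_gammaIdeal {Y : ProjSubscheme K n} (hY : S.ideal ≤ Y.ideal) :
    Y.deg + Module.finrank K (S.gammaIdeal Y) = S.deg := by
  have : Module.Finite K Y.Gamma := (S.avoidsInfinity.mono hY).finite_Gamma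
  rw [Y.deg_eq_finrank, S.deg_eq_finrank]
  let f : S.Gamma →ₐ[K] Y.Gamma := Ideal.Quotient.factorₐ K (sup_le_sup_right hY _)
  have hf : Function.Surjective f := by
    intro a
    obtain ⟨F, rfl⟩ := Ideal.Quotient.mk_surjective a
    exact ⟨Ideal.Quotient.mk _ F, rfl⟩
  have h := LinearMap.finrank_range_add_finrank_ker f.toLinearMap
  have hker : LinearMap.ker f.toLinearMap = (S.gammaIdeal Y).restrictScalars K := by
    ext a
    obtain ⟨F, rfl⟩ := Ideal.Quotient.mk_surjective a
    refine Iff.trans ?_ (mk_mem_gammaIdeal_iff hY).symm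
    exact Ideal.Quotient.eq_zero_iff_mem
  rw [LinearMap.range_eq_top.2 hf, finrank_top, hker] at h
  exact h

namespace IsMaximalSubscheme

variable {p : S.Pt} {Y : ProjSubscheme K n}

lemma stalkKer_eq (Y : ProjSubscheme K n) (p : S.Pt) :
    S.stalkKer Y p = (S.gammaIdeal Y).map (algebraMap S.Gamma (S.O p)) := by
  rw [stalkKer, gammaIdeal, Ideal.map_map]; rfl

lemma mem_stalkKer_iff {x : S.O p} :
    x ∈ S.stalkKer Y p ↔ ∃ b ∈ S.gammaIdeal Y, algebraMap S.Gamma (S.O p) b = x := by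
  rw [stalkKer_eq]
  exact Ideal.mem_map_iff_of_surjective _ (algebraMap_O_surjective p)

lemma germ_eq_zero (h : S.IsMaximalSubscheme p Y) {b : S.Gamma} (hb : b ∈ S.gammaIdeal Y)
    {q : S.Pt} (hq : q ≠ p) : algebraMap S.Gamma (S.O q) b = 0 := by
  have h1 : algebraMap S.Gamma (S.O q) b ∈ S.stalkKer Y q := mem_stalkKer_iff.2 ⟨b, hb, rfl⟩
  rw [h.stalk_eq q hq] at h1
  exact h1

lemma germ_injOn (h : S.IsMaximalSubscheme p Y) {a b : S.Gamma} (ha : a ∈ S.gammaIdeal Y)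
    (hb : b ∈ S.gammaIdeal Y) (hab : algebraMap S.Gamma (S.O p) a = algebraMap S.Gamma (S.O p) b) :
    a = b := by
  refine eq_of_forall_germ_eq fun q => ?_
  by_cases hq : q = p
  · subst hq; exact hab
  · rw [h.germ_eq_zero ha hq, h.germ_eq_zero hb hq]

/-- The kernel of `𝒪_{𝕏,p} → 𝒪_{𝕐,p}` as a `K`-vector space. -/
def stalkKerₗ (Y : ProjSubscheme K n) (p : S.Pt) : Submodule K (S.O p) :=
  ((S.gammaIdeal Y).restrictScalars K).map (Algebra.algHom K S.Gamma (S.O p)).toLinearMap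

lemma mem_stalkKerₗ_iff (x : S.O p) : x ∈ stalkKerₗ Y p ↔ x ∈ S.stalkKer Y p :=
  Iff.trans Iff.rfl mem_stalkKer_iff.symm

lemma finrank_stalkKerₗ (h : S.IsMaximalSubscheme p Y) :
    Module.finrank K (stalkKerₗ Y p) = Module.finrank K (S.kappa p) := by
  have h1 : Module.finrank K (stalkKerₗ Y p) = Module.finrank K (S.gammaIdeal Y) := by
    rw [stalkKerₗ, ← LinearMap.range_domRestrict]
    exact LinearMap.finrank_range_of_inj fun a b hab => Subtype.ext (h.germ_injOn a.2 b.2 hab)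
  exact h1.trans (Nat.add_left_cancel ((finrank_gammaIdeal h.le).trans h.deg_eq.symm))

lemma exists_socle_generator (h : S.IsMaximalSubscheme p Y) :
    ∃ s : S.O p, s ≠ 0 ∧ (∀ b ∈ IsLocalRing.maximalIdeal (S.O p), b * s = 0) ∧
      S.stalkKer Y p = Ideal.span {s} :=
  @IsLocalRing.exists_socle_generator K (S.O p) _ _ _ _ _ (S.stalkKer Y p) (stalkKerₗ Y p)
    mem_stalkKerₗ_iff h.finrank_stalkKerₗ

lemma exists_isSocleElement (h : S.IsMaximalSubscheme p Y) : ∃ s, S.IsSocleElement p Y s := by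
  obtain ⟨s, h0, hs, hJ⟩ := h.exists_socle_generator
  exact ⟨s, h0, hs, hJ⟩

end IsMaximalSubscheme

namespace IsSocleElement

variable {p : S.Pt} {Y : ProjSubscheme K n} {s : S.O p}

lemma mul_eq_mul (hs : S.IsSocleElement p Y s) {a b : S.O p}
    (h : IsLocalRing.residue _ a = IsLocalRing.residue _ b) : a * s = b * s := by
  rw [← sub_eq_zero, ← sub_mul]
  have h0 : IsLocalRing.residue (S.O p) (a - b) = 0 := by rw [map_sub, h, sub_self]
  exact hs.socle _ ((IsLocalRing.residue_eq_zero_iff (a - b)).1 h0)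

lemma isUnit_of_mul_ne_zero (hs : S.IsSocleElement p Y s) {a : S.O p} (h : a * s ≠ 0) :
    IsUnit a := by
  by_contra ha
  exact h (hs.socle a ((IsLocalRing.mem_maximalIdeal a).2 ha))

lemma exists_germ_eq (hs : S.IsSocleElement p Y s) (a : S.O p) :
    ∃ b ∈ S.gammaIdeal Y, algebraMap S.Gamma (S.O p) b = a * s := by
  refine IsMaximalSubscheme.mem_stalkKer_iff.1 ?_
  rw [hs.span_eq]
  exact Ideal.mul_mem_left _ _ (Ideal.mem_span_singleton_self s)

lemma exists_mul_eq_germ (hs : S.IsSocleElement p Y s) {b : S.Gamma} (hb : b ∈ S.gammaIdeal Y) :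
    ∃ a, a * s = algebraMap S.Gamma (S.O p) b := by
  have h : algebraMap S.Gamma (S.O p) b ∈ S.stalkKer Y p :=
    IsMaximalSubscheme.mem_stalkKer_iff.2 ⟨b, hb, rfl⟩
  rw [hs.span_eq] at h
  exact Ideal.mem_span_singleton'.1 h

end IsSocleElement

lemma IsResidueBasis.mul_socle_ne_zero {p : S.Pt} {Y : ProjSubscheme K n} {s : S.O p}
    {e : Fin (Module.finrank K (S.kappa p)) → S.O p} (he : S.IsResidueBasis p e)
    (hs : S.IsSocleElement p Y s) (k : Fin (Module.finrank K (S.kappa p))) : e k * s ≠ 0 := by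
  obtain ⟨B, hB⟩ := he
  have hu : IsUnit (e k) := by
    by_contra h
    have h1 := (IsLocalRing.residue_eq_zero_iff_not_isUnit (e k)).2 h
    rw [← hB] at h1
    exact B.ne_zero k h1
  intro h0
  exact hs.ne_zero (hu.mul_right_eq_zero.1 h0)

lemma exists_isResidueBasis (p : S.Pt) : ∃ e, S.IsResidueBasis p e := by
  have := IsLocalRing.finite_residueField_of_finite K (S.O p)
  let B := Module.finBasis K (S.kappa p)
  choose e he using fun k => IsLocalRing.residue_surjective (R := S.O p) (B k)
  exact ⟨e, B, fun k => (he k).symm⟩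

namespace IsMaximalSubscheme

variable {p : S.Pt} {Y : ProjSubscheme K n}

/-- The ideal of a maximal `p`-subscheme is a minimal ideal of `Γ`. -/
lemma exists_eq_mul (h : S.IsMaximalSubscheme p Y) :
    ∀ b ∈ S.gammaIdeal Y, b ≠ 0 → ∀ x ∈ S.gammaIdeal Y, ∃ c, x = c * b := by
  intro b hb hb0 x hx
  obtain ⟨s, hs⟩ := h.exists_isSocleElement
  obtain ⟨u, hu⟩ := hs.exists_mul_eq_germ hb
  obtain ⟨v, hv⟩ := hs.exists_mul_eq_germ hx
  have hu0 : u * s ≠ 0 := by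
    intro h0
    refine hb0 (h.germ_injOn hb (zero_mem _) ?_)
    rw [← hu, h0, map_zero]
  obtain ⟨w, hw⟩ := (hs.isUnit_of_mul_ne_zero hu0).exists_left_inv
  obtain ⟨c, hc⟩ := algebraMap_O_surjective p (v * w)
  refine ⟨c, h.germ_injOn hx (Ideal.mul_mem_left _ _ hb) ?_⟩
  rw [map_mul, hc, ← hu, ← hv]
  linear_combination (-v * s) * hw

lemma mu_eq (h : S.IsMaximalSubscheme p Y) {b : S.Gamma} (hb : b ∈ S.gammaIdeal Y) :
    S.mu p (algebraMap S.Gamma (S.O p) b) = sInf {i : ℕ | b ∈ S.fil i} := by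
  rw [mu]
  congr 1
  ext i
  constructor
  · rintro ⟨f, hf, hfp, hfq⟩
    refine S.mem_fil_natCast.2 ⟨f, hf, eq_of_forall_germ_eq fun q => ?_⟩
    by_cases hq : q = p
    · subst hq; exact hfp
    · rw [h.germ_eq_zero hb hq]; exact hfq q hq
  · intro hi
    obtain ⟨f, hf, rfl⟩ := S.mem_fil_natCast.1 hi
    exact ⟨f, hf, rfl, fun q hq => h.germ_eq_zero hb hq⟩

lemma mu_le_rX (h : S.IsMaximalSubscheme p Y) {b : S.Gamma} (hb : b ∈ S.gammaIdeal Y) :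
    S.mu p (algebraMap S.Gamma (S.O p) b) ≤ S.rX := by
  rw [h.mu_eq hb]
  exact Nat.sInf_le (S.mem_fil_of_rX_le le_rfl b)

lemma rX_le_mu_iff (h : S.IsMaximalSubscheme p Y) {b : S.Gamma} (hb : b ∈ S.gammaIdeal Y)
    (hb0 : b ≠ 0) :
    S.rX ≤ S.mu p (algebraMap S.Gamma (S.O p) b) ↔ b ∉ S.fil ((S.rX : ℤ) - 1) := by
  rw [h.mu_eq hb]
  constructor
  · intro hle hmem
    rcases Nat.eq_zero_or_pos S.rX with h0 | h0
    · rw [S.fil_of_neg (by omega)] at hmem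
      exact hb0 hmem
    · have h1 : S.rX - 1 ∈ {i : ℕ | b ∈ S.fil i} := by
        change b ∈ S.fil ((S.rX - 1 : ℕ) : ℤ)
        rwa [Nat.cast_pred h0]
      have := Nat.sInf_le h1
      omega
  · intro hmem
    refine le_csInf ⟨S.rX, S.mem_fil_of_rX_le le_rfl b⟩ fun i hi => ?_
    by_contra! hlt
    exact hmem (S.fil_mono (show (i : ℤ) ≤ (S.rX : ℤ) - 1 by omega) hi)

lemma rX_le_muY_iff (h : S.IsMaximalSubscheme p Y) :
    S.rX ≤ S.muY p Y ↔ ¬ ∀ b ∈ S.gammaIdeal Y, b ∈ S.fil ((S.rX : ℤ) - 1) := by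
  have hbdd : BddAbove {m : ℕ | ∃ s e k, S.IsSocleElement p Y s ∧ S.IsResidueBasis p e ∧
      m = S.mu p (e k * s)} := by
    refine ⟨S.rX, ?_⟩
    rintro _ ⟨s, e, k, hs, -, rfl⟩
    obtain ⟨b, hb, hbs⟩ := hs.exists_germ_eq (e k)
    rw [← hbs]
    exact h.mu_le_rX hb
  obtain ⟨s, hs⟩ := h.exists_isSocleElement
  obtain ⟨e, he⟩ := S.exists_isResidueBasis p
  constructor
  · intro hle hall
    have := IsLocalRing.finite_residueField_of_finite K (S.O p)
    have hne : {m : ℕ | ∃ s e k, S.IsSocleElement p Y s ∧ S.IsResidueBasis p e ∧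
        m = S.mu p (e k * s)}.Nonempty :=
      ⟨_, s, e, ⟨0, Module.finrank_pos⟩, hs, he, rfl⟩
    obtain ⟨s, e, k, hs, he, hm⟩ := Nat.sSup_mem hne hbdd
    rw [muY, hm] at hle
    obtain ⟨b, hb, hbs⟩ := hs.exists_germ_eq (e k)
    have hb0 : b ≠ 0 := by
      rintro rfl
      exact he.mul_socle_ne_zero hs k (by rw [← hbs, map_zero])
    rw [← hbs] at hle
    exact (h.rX_le_mu_iff hb hb0).1 hle (hall b hb)
  · intro hnot
    by_contra! hlt
    refine hnot fun x hx => ?_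
    choose b hb hbs using fun k => hs.exists_germ_eq (e k)
    have hbk : ∀ k, b k ∈ S.fil ((S.rX : ℤ) - 1) := by
      intro k
      by_contra hk
      have hb0 : b k ≠ 0 := fun h0 => hk (h0 ▸ zero_mem _)
      have h1 := (h.rX_le_mu_iff (hb k) hb0).2 hk
      rw [hbs] at h1
      have h2 : S.mu p (e k * s) ≤ S.muY p Y := le_csSup hbdd ⟨s, e, k, hs, he, rfl⟩
      omega
    obtain ⟨v, hv⟩ := hs.exists_mul_eq_germ hx
    obtain ⟨B, hB⟩ := he
    have hx' : x = ∑ k, B.repr (IsLocalRing.residue _ v) k • b k := by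
      refine h.germ_injOn hx (sum_mem fun k _ => ?_) ?_
      · rw [Algebra.smul_def]; exact Ideal.mul_mem_left _ _ (hb k)
      · have h1 : v * s = (∑ k, B.repr (IsLocalRing.residue _ v) k • e k) * s := by
          refine hs.mul_eq_mul ?_
          conv_lhs => rw [← B.sum_repr (IsLocalRing.residue _ v)]
          rw [map_sum]
          refine Finset.sum_congr rfl fun k _ => ?_
          rw [hB]
          exact (IsLocalRing.residue_smul _ _).symm
        rw [← hv, h1, map_sum, Finset.sum_mul]
        refine Finset.sum_congr rfl fun k _ => ?_
        rw [smul_mul_assoc, ← hbs]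
        exact (map_smul (Algebra.algHom K S.Gamma (S.O p)) _ _).symm
    rw [hx']
    exact sum_mem fun k _ => Submodule.smul_mem _ _ (hbk k)

end IsMaximalSubscheme

end ZeroDimScheme

end

theorem dedekind_CB_stmt6 {K : Type*} [Field K] {n : ℕ} (S : ZeroDimScheme K n)
    (hS : S.IsLocallyGorenstein) (σ : S.Q →ₗ[S.L0] S.L0) (hσ : S.IsHomogeneousTraceMap σ) :
    S.IsCayleyBacharach ↔
      ∀ (p : S.Pt) (Y : ProjSubscheme K n), S.IsMaximalSubscheme p Y →
        ¬ ((fun f : S.R => ((S.x0Q ^ ((S.rX : ℤ) - 1) : S.Qˣ) : S.Q) * algebraMap S.R S.Q f) ''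
            {f | f ∈ S.comp S.rX ∧ f ∈ S.relIdeal Y} ⊆
          {q | q ∈ S.different σ ∧ q ∈ S.compQ (2 * (S.rX : ℤ) - 1)}) := by
  have hCB : S.IsCayleyBacharach ↔
      ∀ (p : S.Pt) (Y : ProjSubscheme K n), S.IsMaximalSubscheme p Y → S.rX ≤ S.muY p Y := by
    simp only [ZeroDimScheme.IsCayleyBacharach, ZeroDimScheme.CBP, ZeroDimScheme.degP,
      sub_add_cancel, Int.toNat_natCast, le_iInf_iff, Nat.cast_le]
  rw [hCB]
  refine forall_congr' fun p => forall_congr' fun Y => forall_congr' fun h => ?_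
  have : Nontrivial S.Gamma :=
    ⟨0, 1, fun h01 => p.isMaximal.ne_top ((Ideal.eq_top_iff_one _).2 (h01 ▸ zero_mem _))⟩
  rw [h.rX_le_muY_iff, ZeroDimScheme.image_subset_different_iff hσ h.le h.exists_eq_mul]
end

section
/- Let $K$ be a field, $P=K[X_0,\dots,X_n]$ the standard graded polynomial ring, and $\mathbb X\subseteq\mathbb P^n_K$ a (non-empty) $0$-dimensional closed subscheme with saturated homogeneous vanishing ideal $I_{\mathbb X}$, homogeneous coordinate ring $R=P/I_{\mathbb X}$ and set of closed points $\operatorname{Supp}(\mathbb X)=\{p_1,\dots,p_s\}$, none of which lies on the hyperplane $\mathcal Z(X_0)$. Let $x_0\in R$ be the residue class of $X_0$. Put $\deg(\mathbb X)=\sum_j\dim_K\mathcal O_{\mathbb X,p_j}$, and let $r_{\mathbb X}$ be the least $i\ge 0$ such that $\dim_K R_j=\deg(\mathbb X)$ for all $j\ge i$. Let $Q^h(R)$ be the localization of $R$ at the homogeneous non-zerodivisors, identified with $\prod_{j=1}^s\mathcal O_{\mathbb X,p_j}[T_j,T_j^{-1}]$ through $f\mapsto(f_{p_1}T_1^i,\dots,f_{p_s}T_s^i)$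 for $f\in R_i$, where $f_{p_j}$ is the germ at $p_j$ of the dehomogenization of $f$ with respect to $x_0$; thus $R\subseteq Q^h(R)$. The conductor of $R$ in $\widetilde R=\prod_{j}\mathcal O_{\mathbb X,p_j}[T_j]\subseteq Q^h(R)$ is $\mathfrak F_{\widetilde R/R}=\{f\in\widetilde R\mid f\widetilde R\subseteq R\}$. Let $L_0=K[x_0,x_0^{-1}]\subseteq Q^h(R)$. A homogeneous trace map of degree zero of $Q^h(R)/L_0$ is an $L_0$-linear map $\sigma:Q^h(R)\to L_0$, homogeneous of degree zero, such that $\{\sigma\}$ is a basis of the $Q^h(R)$-module $\operatorname{Hom}_{L_0}(Q^h(R),L_0)$, where $(g\cdot\sigma)(q)=\sigma(gq)$. For such $\sigma$ let $\mathfrak C^\sigma_{\mathbb X}$ be the set of all $g\in Q^h(R)$ for which $g\cdot\sigma=\varphi\otimes\mathrm{id}_{L_0}$ for some $\varphi\in\operatorname{Hom}_{K[x_0]}(R,K[x_0])$, that is, $g\cdot\sigma$ extends $\varphi$. The Dedekind different is $\delta^\sigma_{\mathbb X}=\{f\in Q^h(R)\mid f\,\mathfrak C^\sigma_{\mathbb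 X}\subseteq R\}$, and $\mathbb X$ has minimal Dedekind different if $\delta^\sigma_{\mathbb X}=\bigoplus_{i\ge 2r_{\mathbb X}}R_i$. A maximal $p_j$-subscheme of $\mathbb X$ is a subscheme $\mathbb Y\subseteq\mathbb X$ with $\mathcal O_{\mathbb Y,p_k}=\mathcal O_{\mathbb X,p_k}$ for $k\ne j$ and $\deg(\mathbb Y)=\deg(\mathbb X)-\dim_K\kappa(p_j)$, where $\kappa(p_j)$ is the residue field of $\mathcal O_{\mathbb X,p_j}$; the kernel of $\mathcal O_{\mathbb X,p_j}\to\mathcal O_{\mathbb Y,p_j}$ is then generated by a non-zero socle element $s_j$. For $a\in\mathcal O_{\mathbb X,p_j}$ let $\mu(a)=\min\{i\ge 0\mid(0,\dots,0,aT_j^i,0,\dots,0)\in R\}$, and let $\mu_{\mathbb Y/\mathbb X}=\max_k\mu(e_ks_j)$, where $e_1,\dots,e_{\varkappa}\in\mathcal O_{\mathbb X,p_j}$ have residue classes forming a $K$-basis of $\kappa(p_j)$ (this does not depend on the choices). Put $\deg_{\mathbb X}(p_j)=\min\{\mu_{\mathbb Y/\mathbb X}\mid\mathbb Y\text{ a maximal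 }p_j\text{-subscheme of }\mathbb X\}$. Then $\mathbb X$ is called a Cayley–Bacharach scheme if $\deg_{\mathbb X}(p_j)\ge r_{\mathbb X}$ for all $j$. Assume that $\mathbb X$ is locally Gorenstein, i.e. that every $\mathcal O_{\mathbb X,p_j}$ is a Gorenstein ring, and let $\sigma$ be a homogeneous trace map of degree zero of $Q^h(R)/L_0$. Then $\mathbb X$ has minimal Dedekind different if and only if $\mathbb X$ is a Cayley–Bacharach scheme and $\mathfrak F_{\widetilde R/R}^2=\delta^\sigma_{\mathbb X}$. -/
noncomputable section

open scoped LaurentPolynomial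

attribute [local instance] MvPolynomial.gradedAlgebra

/-- A `0`-dimensional closed subscheme `𝕏 ⊆ ℙⁿ_K` no point of whose support lies on the
hyperplane `Z(X₀)`, given by its homogeneous vanishing ideal `I_𝕏 ⊆ P = K[X₀,…,Xₙ]`
(closed subschemes of `ℙⁿ_K` correspond to saturated homogeneous ideals of `P`). -/
structure ZeroDimSubscheme (K : Type*) [Field K] (n : ℕ) where
  /-- the homogeneous vanishing ideal `I_𝕏` -/
  ideal : Ideal (MvPolynomial (Fin (n + 1)) K)
  homogeneous : ideal.IsHomogeneous (MvPolynomial.homogeneousSubmodule (Fin (n + 1)) K)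
  saturated : ∀ F : MvPolynomial (Fin (n + 1)) K,
    (∃ N : ℕ, ∀ G ∈ (HomogeneousIdeal.irrelevant
        (MvPolynomial.homogeneousSubmodule (Fin (n + 1)) K)).toIdeal ^ N, G * F ∈ ideal) →
      F ∈ ideal
  /-- `dim 𝕏 = 0`, that is, the homogeneous coordinate ring has Krull dimension `1` -/
  dim_eq : ringKrullDim (MvPolynomial (Fin (n + 1)) K ⧸ ideal) = 1
  /-- no point of `𝕏` lies on `Z(X₀)` -/
  support_off : ∀ p : ProjectiveSpectrum (MvPolynomial.homogeneousSubmodule (Fin (n + 1)) K),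
    ideal ≤ p.asHomogeneousIdeal.toIdeal →
      MvPolynomial.X 0 ∉ p.asHomogeneousIdeal.toIdeal

namespace ZeroDimSubscheme

variable {K : Type*} [Field K] {n : ℕ} (X : ZeroDimSubscheme K n)

/-! ### The homogeneous coordinate ring -/

/-- The homogeneous coordinate ring `R = P/I_𝕏`. -/
abbrev R : Type _ := MvPolynomial (Fin (n + 1)) K ⧸ X.ideal

/-- The homogeneous component `R_i`. -/
def Rgr (i : ℕ) : Submodule K X.R :=
  (MvPolynomial.homogeneousSubmodule (Fin (n + 1)) K i).map
    (Ideal.Quotient.mkₐ K X.ideal).toLinearMap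

/-- The residue class `x₀` of `X₀` in `R`. -/
def x0 : X.R := Ideal.Quotient.mk X.ideal (MvPolynomial.X 0)

/-! ### Points and local rings

As `𝕏` is contained in the affine chart `D₊(X₀)`, it is the affine scheme `Spec Γ`, where
`Γ = P/(I_𝕏 + (X₀ - 1))` is obtained by dehomogenizing.  Hence the closed points of `𝕏` are the
maximal ideals of `Γ`, and the local rings are the localizations of `Γ` there. -/

/-- The affine coordinate ring `Γ = H⁰(𝕏, 𝒪_𝕏)`. -/
abbrev Gam : Type _ :=
  MvPolynomial (Fin (n + 1)) K ⧸
    (X.ideal ⊔ Ideal.span {(MvPolynomial.X 0 - 1 : MvPolynomial (Fin (n + 1)) K)})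

/-- The support `{p₁,…,p_s}`, the set of closed points of `𝕏`. -/
abbrev Supp : Type _ := MaximalSpectrum X.Gam

/-- The local ring `𝒪_{𝕏,p}`. -/
def O (p : X.Supp) : Type _ := Localization.AtPrime p.asIdeal

instance (p : X.Supp) : CommRing (X.O p) :=
  inferInstanceAs (CommRing (Localization.AtPrime p.asIdeal))

instance (p : X.Supp) : IsLocalRing (X.O p) :=
  inferInstanceAs (IsLocalRing (Localization.AtPrime p.asIdeal))

instance (p : X.Supp) : Algebra X.Gam (X.O p) :=
  inferInstanceAs (Algebra X.Gam (Localization.AtPrime p.asIdeal))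

instance (p : X.Supp) : IsLocalization.AtPrime (X.O p) p.asIdeal :=
  inferInstanceAs (IsLocalization.AtPrime (Localization.AtPrime p.asIdeal) p.asIdeal)

instance (p : X.Supp) : Algebra K (X.O p) :=
  inferInstanceAs (Algebra K (Localization.AtPrime p.asIdeal))

instance (p : X.Supp) : IsScalarTower K X.Gam (X.O p) :=
  inferInstanceAs (IsScalarTower K X.Gam (Localization.AtPrime p.asIdeal))

/-- The germ at `p` of a form, that is, of its dehomogenization with respect to `X₀`. -/
def germ (p : X.Supp) : MvPolynomial (Fin (n + 1)) K →ₐ[K] X.O p :=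
  (IsScalarTower.toAlgHom K X.Gam (X.O p)).comp (Ideal.Quotient.mkₐ K _)

/-- `deg(𝕏) = ∑_j dim_K 𝒪_{𝕏,p_j}`. -/
def deg : ℕ := ∑ᶠ p : X.Supp, Module.finrank K (X.O p)

/-- The regularity index `r_𝕏`: the least `i` with `dim_K R_j = deg(𝕏)` for all `j ≥ i`. -/
def rX : ℕ := sInf {i : ℕ | ∀ j, i ≤ j → Module.finrank K (X.Rgr j) = X.deg}

/-- `𝕏` is locally Gorenstein: every (Noetherian) local ring `𝒪_{𝕏,p}` has finite injective
dimension over itself. -/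
def LocallyGorenstein : Prop :=
  ∀ p : X.Supp, ∃ d : ℕ,
    CategoryTheory.HasInjectiveDimensionLE (ModuleCat.of (X.O p) (X.O p)) d

/-! ### The homogeneous ring of quotients -/

/-- The homogeneous ring of quotients `Q^h(R)`, in the form `∏_j 𝒪_{𝕏,p_j}[T_j, T_j⁻¹]`.
It is shown below that, with the homomorphism `iota`, this is the localization of `R` with respect
to the set of all homogeneous non-zerodivisors. -/
abbrev Q : Type _ := ∀ p : X.Supp, (X.O p)[T;T⁻¹]

/-- The homogeneous component `Q^h(R)_k`, consisting of the elements `(a_j T_j^k)_j`. -/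
def Qgr (k : ℤ) : Submodule K X.Q where
  carrier := {q | ∀ p, ∃ a : X.O p, q p = LaurentPolynomial.C a * LaurentPolynomial.T k}
  add_mem' {q q'} h h' p := by
    obtain ⟨a, ha⟩ := h p
    obtain ⟨b, hb⟩ := h' p
    exact ⟨a + b, by rw [Pi.add_apply, ha, hb, map_add, add_mul]⟩
  zero_mem' p := ⟨0, by simp⟩
  smul_mem' c q h p := by
    obtain ⟨a, ha⟩ := h p
    refine ⟨c • a, ?_⟩
    rw [Pi.smul_apply, ha, ← LaurentPolynomial.single_eq_C_mul_T,
      ← LaurentPolynomial.single_eq_C_mul_T, AddMonoidAlgebra.smul_single]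

/-- The map `P → Q^h(R)` that sends a form `F` of degree `i` to `(F_{p_j} T_j^i)_j`. -/
def iotaP : MvPolynomial (Fin (n + 1)) K →ₐ[K] X.Q :=
  MvPolynomial.aeval fun i p =>
    LaurentPolynomial.C (X.germ p (MvPolynomial.X i)) * LaurentPolynomial.T 1

theorem iotaP_of_isHomogeneous {F : MvPolynomial (Fin (n + 1)) K} {i : ℕ}
    (hF : F.IsHomogeneous i) (p : X.Supp) :
    X.iotaP F p = LaurentPolynomial.C (X.germ p F) * LaurentPolynomial.T i := by
  have hmono : ∀ (d : Fin (n + 1) →₀ ℕ) (c : K),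
      X.iotaP (MvPolynomial.monomial d c) p =
        LaurentPolynomial.C (X.germ p (MvPolynomial.monomial d c)) *
          LaurentPolynomial.T (d.degree : ℤ) := by
    intro d c
    have h1 : X.germ p (MvPolynomial.monomial d c) =
        algebraMap K (X.O p) c * d.prod fun i k => X.germ p (MvPolynomial.X i) ^ k := by
      rw [MvPolynomial.monomial_eq, map_mul, MvPolynomial.algHom_C, Finsupp.prod, map_prod]
      simp [Finsupp.prod]
    rw [h1, iotaP, MvPolynomial.aeval_monomial, Finsupp.prod, Finsupp.prod, Pi.mul_apply,
      Finset.prod_apply, map_mul, map_prod, mul_assoc]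
    congr 1
    simp only [Pi.pow_apply, mul_pow, map_pow, Finset.prod_mul_distrib]
    congr 1
    simp only [LaurentPolynomial.T_pow, mul_one, Finsupp.degree_apply]
    induction d.support using Finset.cons_induction with
    | empty => simp
    | cons a s ha ih =>
      rw [Finset.prod_cons, Finset.sum_cons, ih, Nat.cast_add, LaurentPolynomial.T_add]
  have h2 : ∀ d ∈ F.support, d.degree = i := fun d hd => by
    rw [Finsupp.degree_eq_weight_one]
    exact hF (MvPolynomial.mem_support_iff.1 hd)
  conv_lhs => rw [F.as_sum]
  conv_rhs => rw [F.as_sum]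
  rw [map_sum, map_sum, map_sum, Finset.sum_mul, Finset.sum_apply]
  refine Finset.sum_congr rfl fun d hd => ?_
  rw [hmono, h2 d hd]

theorem iotaP_eq_zero (F : MvPolynomial (Fin (n + 1)) K) (hF : F ∈ X.ideal) :
    X.iotaP F = 0 := by
  rw [← MvPolynomial.sum_homogeneousComponent F, map_sum]
  refine Finset.sum_eq_zero fun i _ => funext fun p => ?_
  rw [X.iotaP_of_isHomogeneous (MvPolynomial.homogeneousComponent_isHomogeneous i F)]
  have h : X.germ p (MvPolynomial.homogeneousComponent i F) = 0 := by
    have h' : Ideal.Quotient.mk (X.ideal ⊔ Ideal.span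
        {(MvPolynomial.X 0 - 1 : MvPolynomial (Fin (n + 1)) K)})
        (MvPolynomial.homogeneousComponent i F) = 0 :=
      Ideal.Quotient.eq_zero_iff_mem.2 (Ideal.mem_sup_left
        (MvPolynomial.homogeneousComponent_mem_of_mem X.homogeneous hF i))
    change algebraMap X.Gam (X.O p) (Ideal.Quotient.mk _ _) = 0
    rw [h', map_zero]
  rw [h, map_zero, zero_mul, Pi.zero_apply]

/-- The homomorphism `R → Q^h(R)`, `f ↦ (f_{p_j} T_j^i)_j` for `f ∈ R_i`. -/
def iota : X.R →ₐ[K] X.Q := Ideal.Quotient.liftₐ X.ideal X.iotaP X.iotaP_eq_zero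

instance instAlgebraRQ : Algebra X.R X.Q := X.iota.toRingHom.toAlgebra

instance : IsScalarTower K X.R X.Q :=
  IsScalarTower.of_algebraMap_eq fun c => (X.iota.commutes c).symm

/-- The subring `K[x₀] ⊆ R`. -/
def Kx0 : Subalgebra K X.R := Algebra.adjoin K {X.x0}

/-- The element `x₀⁻¹ = (T_j⁻¹)_j` of `Q^h(R)`. -/
def x0inv : X.Q := fun _ => LaurentPolynomial.T (-1)

theorem mk_X0_Gam : Ideal.Quotient.mk (X.ideal ⊔ Ideal.span
    {(MvPolynomial.X 0 - 1 : MvPolynomial (Fin (n + 1)) K)}) (MvPolynomial.X 0) = 1 := by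
  rw [← map_one (Ideal.Quotient.mk _), Ideal.Quotient.eq]
  exact Ideal.mem_sup_right (Ideal.subset_span rfl)

theorem germ_X0 (p : X.Supp) : X.germ p (MvPolynomial.X 0) = 1 := by
  change algebraMap X.Gam (X.O p) (Ideal.Quotient.mk _ _) = 1
  rw [mk_X0_Gam, map_one]

theorem x0_mul_x0inv : algebraMap X.R X.Q X.x0 * X.x0inv = 1 := by
  funext p
  change X.iotaP (MvPolynomial.X 0) p * LaurentPolynomial.T (-1) = 1
  rw [X.iotaP_of_isHomogeneous (MvPolynomial.isHomogeneous_X K 0), germ_X0, map_one, one_mul,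
    ← LaurentPolynomial.T_add]
  simp

/-- The subring `L₀ = K[x₀, x₀⁻¹] ⊆ Q^h(R)`. -/
def L0 : Subalgebra K X.Q := Algebra.adjoin K {algebraMap X.R X.Q X.x0, X.x0inv}

/-! ### `Q` is the homogeneous ring of quotients of `R` -/

theorem irrelevant_pow_le : ∃ N : ℕ,
    (HomogeneousIdeal.irrelevant (MvPolynomial.homogeneousSubmodule (Fin (n + 1)) K)).toIdeal ^ N ≤
      X.ideal ⊔ Ideal.span {(MvPolynomial.X 0 : MvPolynomial (Fin (n + 1)) K)} := by
  refine Ideal.exists_pow_le_of_le_radical_of_fg ?_ (IsNoetherian.noetherian _)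
  have hJ : (X.ideal ⊔ Ideal.span
      {(MvPolynomial.X 0 : MvPolynomial (Fin (n + 1)) K)}).IsHomogeneous
      (MvPolynomial.homogeneousSubmodule (Fin (n + 1)) K) :=
    X.homogeneous.sup (Ideal.homogeneous_span _ _ (by
      rintro x rfl
      exact ⟨1, MvPolynomial.isHomogeneous_X K 0⟩))
  rw [hJ.radical_eq]
  refine le_sInf ?_
  rintro J ⟨hh, hle, hp⟩
  by_contra hn
  exact X.support_off ⟨⟨J, hh⟩, hp, hn⟩ (le_sup_left.trans hle)
    (hle (Ideal.mem_sup_right (Ideal.subset_span rfl)))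

theorem mem_of_X0_mul_mem {F : MvPolynomial (Fin (n + 1)) K}
    (hF : MvPolynomial.X 0 * F ∈ X.ideal) : F ∈ X.ideal := by
  obtain ⟨N, hN⟩ := X.irrelevant_pow_le
  refine X.saturated F ⟨N, fun G hG => ?_⟩
  obtain ⟨a, ha, b, hb, rfl⟩ := Submodule.mem_sup.1 (hN hG)
  obtain ⟨c, rfl⟩ := Ideal.mem_span_singleton'.1 hb
  rw [add_mul, mul_assoc]
  exact add_mem (Ideal.mul_mem_right _ _ ha) (Ideal.mul_mem_left _ _ hF)

theorem mem_of_X0_pow_mul_mem {F : MvPolynomial (Fin (n + 1)) K} (k : ℕ)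
    (hF : MvPolynomial.X 0 ^ k * F ∈ X.ideal) : F ∈ X.ideal := by
  induction k with
  | zero => simpa using hF
  | succ k ih => exact ih (X.mem_of_X0_mul_mem (by rwa [← mul_assoc, ← pow_succ']))

theorem homogeneousComponent_succ_X0_mul (b : MvPolynomial (Fin (n + 1)) K) (i : ℕ) :
    MvPolynomial.homogeneousComponent (i + 1) (MvPolynomial.X 0 * b) =
      MvPolynomial.X 0 * MvPolynomial.homogeneousComponent i b := by
  have h : ∀ c : MvPolynomial (Fin (n + 1)) K, ∀ j, c.IsHomogeneous j →
      MvPolynomial.homogeneousComponent (i + 1) (MvPolynomial.X 0 * c) =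
        MvPolynomial.X 0 * MvPolynomial.homogeneousComponent i c := by
    intro c j hc
    have h1 : (MvPolynomial.X 0 * c : MvPolynomial (Fin (n + 1)) K).IsHomogeneous (j + 1) := by
      have := (MvPolynomial.isHomogeneous_X K (0 : Fin (n + 1))).mul hc
      rwa [add_comm 1 j] at this
    rw [MvPolynomial.homogeneousComponent_of_mem h1, MvPolynomial.homogeneousComponent_of_mem hc]
    by_cases hij : i = j <;> simp [hij]
  conv_lhs => rw [← MvPolynomial.sum_homogeneousComponent b]
  conv_rhs => rw [← MvPolynomial.sum_homogeneousComponent b]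
  rw [Finset.mul_sum, map_sum, map_sum, Finset.mul_sum]
  exact Finset.sum_congr rfl fun j _ =>
    h _ j (MvPolynomial.homogeneousComponent_isHomogeneous j b)

theorem homogeneousComponent_zero_X0_mul (b : MvPolynomial (Fin (n + 1)) K) :
    MvPolynomial.homogeneousComponent 0 (MvPolynomial.X 0 * b) = 0 := by
  classical
  rw [MvPolynomial.homogeneousComponent_zero, MvPolynomial.coeff_X_mul']
  simp

/-- A form whose dehomogenization vanishes on `𝕏` lies in `I_𝕏`. -/
theorem mem_of_isHomogeneous {F : MvPolynomial (Fin (n + 1)) K} {i : ℕ} (hF : F.IsHomogeneous i)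
    (h : F ∈ X.ideal ⊔
      Ideal.span {(MvPolynomial.X 0 - 1 : MvPolynomial (Fin (n + 1)) K)}) : F ∈ X.ideal := by
  obtain ⟨a, ha, b', hb, hab⟩ := Submodule.mem_sup.1 h
  obtain ⟨b, rfl⟩ := Ideal.mem_span_singleton.1 hb
  have hcomp := fun j => MvPolynomial.homogeneousComponent_mem_of_mem X.homogeneous ha j
  have key : ∀ j, MvPolynomial.homogeneousComponent j b = MvPolynomial.homogeneousComponent j a +
      MvPolynomial.homogeneousComponent j (MvPolynomial.X 0 * b) -
        MvPolynomial.homogeneousComponent j F := by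
    intro j
    rw [← map_add, ← map_sub, ← hab]
    congr 1; ring
  have hF' := fun j => MvPolynomial.homogeneousComponent_of_mem (m := j) hF
  have h1 : ∀ j, j < i → MvPolynomial.homogeneousComponent j b ∈ X.ideal := by
    intro j
    induction j with
    | zero =>
      intro hj
      rw [key, homogeneousComponent_zero_X0_mul, hF', if_neg hj.ne, sub_zero, add_zero]
      exact hcomp 0
    | succ j ih =>
      intro hj
      rw [key, homogeneousComponent_succ_X0_mul, hF', if_neg hj.ne, sub_zero]
      exact add_mem (hcomp _) (Ideal.mul_mem_left _ _ (ih (by omega)))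
  have h2 : ∀ k, MvPolynomial.homogeneousComponent (i + k) b + MvPolynomial.X 0 ^ k * F
      ∈ X.ideal := by
    intro k
    induction k with
    | zero =>
      rw [add_zero, key, hF', if_pos rfl, pow_zero, one_mul, sub_add_cancel]
      refine add_mem (hcomp _) ?_
      cases i with
      | zero => rw [homogeneousComponent_zero_X0_mul]; exact zero_mem _
      | succ i =>
        rw [homogeneousComponent_succ_X0_mul]
        exact Ideal.mul_mem_left _ _ (h1 i (by omega))
    | succ k ih =>
      rw [← add_assoc, key, homogeneousComponent_succ_X0_mul, hF', if_neg (by omega), sub_zero,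
        pow_succ', add_assoc, mul_assoc, ← mul_add]
      exact add_mem (hcomp _) (Ideal.mul_mem_left _ _ ih)
  have h3 := h2 (b.totalDegree + 1)
  rw [MvPolynomial.homogeneousComponent_eq_zero _ _ (by omega), zero_add] at h3
  exact X.mem_of_X0_pow_mul_mem _ h3

/-- Every element of `Γ` is the dehomogenization of a form. -/
theorem exists_form (a : X.Gam) : ∃ (d : ℕ) (F : MvPolynomial (Fin (n + 1)) K),
    F.IsHomogeneous d ∧ Ideal.Quotient.mk _ F = a := by
  obtain ⟨G, rfl⟩ := Ideal.Quotient.mk_surjective a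
  refine ⟨G.totalDegree, ∑ i ∈ Finset.range (G.totalDegree + 1),
    MvPolynomial.X 0 ^ (G.totalDegree - i) * MvPolynomial.homogeneousComponent i G,
    MvPolynomial.IsHomogeneous.sum _ _ _ fun i hi => ?_, ?_⟩
  · have h := ((MvPolynomial.isHomogeneous_X K (0 : Fin (n + 1))).pow (G.totalDegree - i)).mul
      (MvPolynomial.homogeneousComponent_isHomogeneous i G)
    rw [one_mul, Nat.sub_add_cancel (Nat.lt_succ_iff.1 (Finset.mem_range.1 hi))] at h
    exact h
  · conv_rhs => rw [← MvPolynomial.sum_homogeneousComponent G]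
    rw [map_sum, map_sum]
    refine Finset.sum_congr rfl fun i _ => ?_
    rw [map_mul, map_pow, mk_X0_Gam, one_pow, one_mul]

instance : Module.Finite K X.Gam := by
  obtain ⟨N, hN⟩ := X.irrelevant_pow_le
  have hle : ∀ F : MvPolynomial (Fin (n + 1)) K, ∀ i, F.IsHomogeneous i →
      ∃ G ∈ MvPolynomial.restrictTotalDegree (Fin (n + 1)) K N,
        (Ideal.Quotient.mk _ F : X.Gam) = Ideal.Quotient.mk _ G := by
    intro F i hF
    induction i generalizing F with
    | zero => exact ⟨F, (MvPolynomial.mem_restrictTotalDegree _ _ _).2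
        (hF.totalDegree_le.trans (Nat.zero_le _)), rfl⟩
    | succ i ih =>
      by_cases hi : i + 1 ≤ N
      · exact ⟨F, (MvPolynomial.mem_restrictTotalDegree _ _ _).2
          (hF.totalDegree_le.trans hi), rfl⟩
      · have hFN : F ∈ (HomogeneousIdeal.irrelevant
            (MvPolynomial.homogeneousSubmodule (Fin (n + 1)) K)).toIdeal ^ N := by
          have h1 : F ∈ Ideal.span (Set.range (MvPolynomial.X (R := K) (σ := Fin (n + 1)))) ^
              (i + 1) := by
            rw [Ideal.span_pow_eq_map_homogeneousSubmodule]
            refine ⟨MvPolynomial.map MvPolynomial.C F, hF.map _, ?_⟩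
            simp only [AlgHom.toLinearMap_apply, MvPolynomial.aeval_def,
              MvPolynomial.eval₂_map, Algebra.algebraMap_self, RingHom.id_comp]
            exact MvPolynomial.eval₂_eta F
          refine Ideal.pow_right_mono ?_ N (Ideal.pow_le_pow_right (by omega) h1)
          rw [Ideal.span_le]
          rintro _ ⟨j, rfl⟩
          exact HomogeneousIdeal.mem_irrelevant_of_mem _ one_pos
            (MvPolynomial.isHomogeneous_X K j)
        obtain ⟨a, ha, b', hb, hab⟩ := Submodule.mem_sup.1 (hN hFN)
        obtain ⟨b, rfl⟩ := Ideal.mem_span_singleton.1 hb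
        obtain ⟨G, hG, hG'⟩ := ih _ (MvPolynomial.homogeneousComponent_isHomogeneous i b)
        refine ⟨G, hG, hG' ▸ ?_⟩
        have h2 : F = MvPolynomial.homogeneousComponent (i + 1) a +
            MvPolynomial.X 0 * MvPolynomial.homogeneousComponent i b := by
          rw [← homogeneousComponent_succ_X0_mul, ← map_add, hab,
            MvPolynomial.homogeneousComponent_eq_self hF]
        rw [h2, map_add, map_mul, mk_X0_Gam, one_mul, Ideal.Quotient.eq_zero_iff_mem.2
          (Ideal.mem_sup_left
            (MvPolynomial.homogeneousComponent_mem_of_mem X.homogeneous ha (i + 1))), zero_add]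
  have : FiniteDimensional K (MvPolynomial.restrictTotalDegree (Fin (n + 1)) K N) :=
    inferInstance
  refine Module.Finite.of_surjective ((Ideal.Quotient.mkₐ K (X.ideal ⊔ Ideal.span
    {(MvPolynomial.X 0 - 1 : MvPolynomial (Fin (n + 1)) K)})).toLinearMap.comp
      (MvPolynomial.restrictTotalDegree (Fin (n + 1)) K N).subtype) fun a => ?_
  obtain ⟨d, F, hF, rfl⟩ := X.exists_form a
  obtain ⟨G, hG, h⟩ := hle F d hF
  exact ⟨⟨G, hG⟩, h.symm⟩

instance : IsArtinianRing X.Gam := IsArtinianRing.of_finite K X.Gam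

instance : Finite X.Supp := inferInstance

/-- `Γ = ∏_j 𝒪_{𝕏,p_j}`. -/
theorem toPi_bijective : Function.Bijective
    (fun (a : X.Gam) (p : X.Supp) => algebraMap X.Gam (X.O p) a) :=
  ⟨MaximalSpectrum.toPiLocalization_injective X.Gam,
    PrimeSpectrum.maximalSpectrumToPiLocalization_surjective_of_discreteTopology X.Gam⟩

/-- The multiplicative set of homogeneous non-zerodivisors of `R`. -/
def homogeneousNonZeroDivisors : Submonoid X.R where
  carrier := {f | f ∈ nonZeroDivisors X.R ∧ ∃ i, f ∈ X.Rgr i}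
  one_mem' := ⟨one_mem _, 0, 1, MvPolynomial.isHomogeneous_one _ _,
    map_one (Ideal.Quotient.mk X.ideal)⟩
  mul_mem' := by
    rintro _ _ ⟨h, i, F, hF, rfl⟩ ⟨h', j, G, hG, rfl⟩
    exact ⟨mul_mem h h', i + j, F * G, MvPolynomial.IsHomogeneous.mul hF hG,
      map_mul (Ideal.Quotient.mk X.ideal) F G⟩

theorem mem_ideal_of_germ {F : MvPolynomial (Fin (n + 1)) K} {i : ℕ} (hF : F.IsHomogeneous i)
    (h : ∀ p, X.germ p F = 0) : F ∈ X.ideal := by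
  refine X.mem_of_isHomogeneous hF (Ideal.Quotient.eq_zero_iff_mem.1 (X.toPi_bijective.1 ?_))
  funext p
  exact (h p).trans (map_zero (algebraMap X.Gam (X.O p))).symm

theorem iota_injective : Function.Injective (algebraMap X.R X.Q) := by
  rw [injective_iff_map_eq_zero]
  intro f hf
  obtain ⟨F, rfl⟩ := Ideal.Quotient.mk_surjective f
  rw [Ideal.Quotient.eq_zero_iff_mem, MvPolynomial.mem_iff_homogeneousComponent_mem X.homogeneous]
  intro i
  refine X.mem_ideal_of_germ (MvPolynomial.homogeneousComponent_isHomogeneous i F) fun p => ?_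
  by_cases hi : i ∈ Finset.range (F.totalDegree + 1)
  · have h1 : X.iotaP F p = 0 := congr_fun hf p
    rw [← MvPolynomial.sum_homogeneousComponent F, map_sum, Finset.sum_apply] at h1
    have h2 := congr_arg (fun q => AddMonoidAlgebra.coeff q (i : ℤ)) h1
    simp only [X.iotaP_of_isHomogeneous (MvPolynomial.homogeneousComponent_isHomogeneous _ F),
      ← LaurentPolynomial.single_eq_C_mul_T, AddMonoidAlgebra.coeff_sum,
      AddMonoidAlgebra.coeff_single, Finsupp.finsetSum_apply, Finsupp.single_apply,
      Nat.cast_inj, Finset.sum_ite_eq', hi, if_true, AddMonoidAlgebra.coeff_zero,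
      Finsupp.coe_zero, Pi.zero_apply] at h2
    exact h2
  · rw [MvPolynomial.homogeneousComponent_eq_zero _ _ (by simpa using hi), map_zero]

theorem iotaP_X0_pow (k : ℕ) (p : X.Supp) :
    X.iotaP (MvPolynomial.X 0 ^ k) p = LaurentPolynomial.T k := by
  have h := (MvPolynomial.isHomogeneous_X K (0 : Fin (n + 1))).pow k
  rw [one_mul] at h
  rw [X.iotaP_of_isHomogeneous h, map_pow, germ_X0, one_pow, map_one, one_mul]

theorem x0_pow_mem (k : ℕ) : X.x0 ^ k ∈ X.homogeneousNonZeroDivisors := by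
  suffices h : X.x0 ∈ nonZeroDivisors X.R from
    Submonoid.pow_mem _ (show X.x0 ∈ X.homogeneousNonZeroDivisors from
      ⟨h, 1, MvPolynomial.X 0, MvPolynomial.isHomogeneous_X K 0, rfl⟩) k
  refine mem_nonZeroDivisors_of_injective X.iota_injective ?_
  exact (IsUnit.of_mul_eq_one _ X.x0_mul_x0inv).mem_nonZeroDivisors

/-- The algebra `∏_j 𝒪_{𝕏,p_j}[T_j, T_j⁻¹]` is the localization of `R` with respect to the set of
all homogeneous non-zerodivisors. -/
instance : IsLocalization X.homogeneousNonZeroDivisors X.Q := by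
  classical
  rw [isLocalization_iff]
  refine ⟨?_, ?_, ?_⟩
  · rintro ⟨_, h, i, F, hF, rfl⟩
    have hu : IsUnit (Ideal.Quotient.mk _ F : X.Gam) := by
      refine IsArtinianRing.isUnit_of_mem_nonZeroDivisors
        (mem_nonZeroDivisors_iff_right.2 fun a ha => ?_)
      obtain ⟨d, G, hG, rfl⟩ := X.exists_form a
      rw [← map_mul, Ideal.Quotient.eq_zero_iff_mem] at ha
      have h1 := X.mem_of_isHomogeneous (hG.mul hF) ha
      have h2 : (Ideal.Quotient.mk X.ideal G) = 0 := by
        refine (mem_nonZeroDivisors_iff_right.1 h) _ ?_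
        exact (map_mul _ _ _).symm.trans (Ideal.Quotient.eq_zero_iff_mem.2 h1)
      exact Ideal.Quotient.eq_zero_iff_mem.2
        (Ideal.mem_sup_left (Ideal.Quotient.eq_zero_iff_mem.1 h2))
    rw [Pi.isUnit_iff]
    intro p
    change IsUnit (X.iotaP F p)
    rw [X.iotaP_of_isHomogeneous hF]
    exact ((hu.map (algebraMap X.Gam (X.O p))).map LaurentPolynomial.C).mul
      (LaurentPolynomial.isUnit_T _)
  · have key : ∀ z : X.Q, ∃ k : ℕ, ∃ x : X.R,
        z * algebraMap X.R X.Q (X.x0 ^ k) = algebraMap X.R X.Q x := by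
      have hadd : ∀ z w : X.Q,
          (∃ k : ℕ, ∃ x : X.R, z * algebraMap X.R X.Q (X.x0 ^ k) = algebraMap X.R X.Q x) →
          (∃ k : ℕ, ∃ x : X.R, w * algebraMap X.R X.Q (X.x0 ^ k) = algebraMap X.R X.Q x) →
          ∃ k : ℕ, ∃ x : X.R, (z + w) * algebraMap X.R X.Q (X.x0 ^ k) = algebraMap X.R X.Q x := by
        rintro z w ⟨k, x, hx⟩ ⟨l, y, hy⟩
        refine ⟨k + l, x * X.x0 ^ l + y * X.x0 ^ k, ?_⟩
        rw [map_add, map_mul, map_mul, ← hx, ← hy, pow_add, map_mul]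
        ring
      have hsingle : ∀ (p : X.Supp) (q : (X.O p)[T;T⁻¹]), ∃ k : ℕ, ∃ x : X.R,
          (Pi.single p q : X.Q) * algebraMap X.R X.Q (X.x0 ^ k) = algebraMap X.R X.Q x := by
        intro p q
        induction q using LaurentPolynomial.induction_on' with
        | add q q' h h' => rw [Pi.single_add]; exact hadd _ _ h h'
        | C_mul_T m a =>
          obtain ⟨b, hb⟩ := X.toPi_bijective.2 (Pi.single p a)
          obtain ⟨d, F, hF, rfl⟩ := X.exists_form b
          have hg : ∀ p', X.germ p' F = (Pi.single p a : ∀ p, X.O p) p' := congr_fun hb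
          refine ⟨d + m.natAbs, Ideal.Quotient.mk _ (MvPolynomial.X 0 ^ (m.natAbs + m).toNat * F),
            ?_⟩
          funext p'
          change (Pi.single p _ : X.Q) p' * (X.iota (Ideal.Quotient.mk _ (MvPolynomial.X 0) ^ _)) p'
            = X.iotaP _ p'
          rw [← map_pow]
          change (Pi.single p _ : X.Q) p' * X.iotaP _ p' = X.iotaP _ p'
          rw [iotaP_X0_pow, map_mul, Pi.mul_apply, iotaP_X0_pow, X.iotaP_of_isHomogeneous hF, hg]
          by_cases hp : p' = p
          · subst hp
            rw [Pi.single_eq_same, Pi.single_eq_same, mul_assoc,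
              mul_left_comm (LaurentPolynomial.T _) (LaurentPolynomial.C a),
              ← LaurentPolynomial.T_add, ← LaurentPolynomial.T_add]
            congr 2
            rw [Int.toNat_of_nonneg (by omega)]
            push_cast
            ring
          · simp [Pi.single_eq_of_ne hp]
      intro z
      have := Fintype.ofFinite X.Supp
      rw [← Finset.univ_sum_single z]
      refine Finset.sum_induction _ (fun z => ∃ k : ℕ, ∃ x : X.R,
        z * algebraMap X.R X.Q (X.x0 ^ k) = algebraMap X.R X.Q x) hadd
        ⟨0, 0, by simp⟩ fun p _ => hsingle p (z p)
    intro z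
    obtain ⟨k, x, h⟩ := key z
    exact ⟨(x, ⟨_, X.x0_pow_mem k⟩), h⟩
  · intro x y h
    exact ⟨1, by rw [X.iota_injective h]⟩

/-! ### The conductor -/

/-- The subring `R̃ = ∏_j 𝒪_{𝕏,p_j}[T_j] ⊆ Q^h(R)`. -/
def Rtilde : Subring X.Q :=
  (RingHom.pi fun p => (Polynomial.toLaurent (R := X.O p)).comp
    (Pi.evalRingHom (fun p : X.Supp => Polynomial (X.O p)) p)).range

theorem algebraMap_mem_Rtilde (f : X.R) : algebraMap X.R X.Q f ∈ X.Rtilde := by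
  obtain ⟨F, rfl⟩ := Ideal.Quotient.mk_surjective f
  change X.iotaP F ∈ X.Rtilde
  rw [← MvPolynomial.sum_homogeneousComponent F, map_sum]
  refine sum_mem fun i _ => ⟨fun p => Polynomial.C
    (X.germ p (MvPolynomial.homogeneousComponent i F)) * Polynomial.X ^ i, funext fun p => ?_⟩
  rw [X.iotaP_of_isHomogeneous (MvPolynomial.homogeneousComponent_isHomogeneous i F)]
  exact Polynomial.toLaurent_C_mul_X_pow _ _

/-- The conductor `𝔉_{R̃/R} = {f ∈ R̃ | f·R̃ ⊆ R}`, as an `R`-submodule of `Q^h(R)`. -/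
def conductor : Submodule X.R X.Q where
  carrier := {f | f ∈ X.Rtilde ∧ ∀ g ∈ X.Rtilde, f * g ∈ (algebraMap X.R X.Q).range}
  add_mem' h h' := ⟨add_mem h.1 h'.1, fun g hg => by
    rw [add_mul]; exact add_mem (h.2 g hg) (h'.2 g hg)⟩
  zero_mem' := ⟨zero_mem _, fun g _ => by rw [zero_mul]; exact zero_mem _⟩
  smul_mem' r f h := by
    rw [Algebra.smul_def]
    exact ⟨mul_mem (X.algebraMap_mem_Rtilde r) h.1, fun g hg => by
      rw [mul_assoc]; exact mul_mem ⟨r, rfl⟩ (h.2 g hg)⟩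

/-! ### The Dedekind complementary module and the Dedekind different -/

/-- The element `g·σ` of the `Q^h(R)`-module `Hom_{L₀}(Q^h(R), L₀)`, `(g·σ)(q) = σ(g q)`. -/
def traceMul (σ : X.Q →ₗ[X.L0] X.L0) (g : X.Q) : X.Q →ₗ[X.L0] X.L0 :=
  σ ∘ₗ LinearMap.mulLeft X.L0 g

/-- `σ` is a homogeneous trace map of degree zero of `Q^h(R)/L₀`: it is homogeneous of degree
zero, and `{σ}` is a basis of the `Q^h(R)`-module `Hom_{L₀}(Q^h(R), L₀)`. -/
structure IsTraceMap (σ : X.Q →ₗ[X.L0] X.L0) : Prop where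
  degree_zero : ∀ (k : ℤ), ∀ q ∈ X.Qgr k, (σ q : X.Q) ∈ X.Qgr k
  basis : Function.Bijective (X.traceMul σ)

/-- `ψ = φ ⊗ id_{L₀}` for `φ : R → K[x₀]` and `ψ : Q^h(R) → L₀`, where
`Q^h(R) = R ⊗_{K[x₀]} L₀`: the `L₀`-linear map `ψ` extends the `K[x₀]`-linear map `φ`. -/
def IsExtension (φ : X.R →ₗ[X.Kx0] X.Kx0) (ψ : X.Q →ₗ[X.L0] X.L0) : Prop :=
  ∀ f : X.R, (ψ (algebraMap X.R X.Q f) : X.Q) = algebraMap X.R X.Q (φ f)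

/-- The Dedekind complementary module `𝔠^σ_𝕏`: the set of all `g = Σ⁻¹(φ ⊗ id_{L₀})`, that is,
`g·σ = φ ⊗ id_{L₀}`, with `φ ∈ ω_R(1) = Hom_{K[x₀]}(R, K[x₀])`. -/
def complementary (σ : X.Q →ₗ[X.L0] X.L0) : Set X.Q :=
  {g | ∃ φ : X.R →ₗ[X.Kx0] X.Kx0, X.IsExtension φ (X.traceMul σ g)}

/-- The Dedekind different `δ^σ_𝕏 = {f ∈ Q^h(R) | f·𝔠^σ_𝕏 ⊆ R}`. -/
def different (σ : X.Q →ₗ[X.L0] X.L0) : Submodule X.R X.Q where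
  carrier := {f | ∀ g ∈ X.complementary σ, f * g ∈ (algebraMap X.R X.Q).range}
  add_mem' h h' g hg := by
    rw [add_mul]; exact add_mem (h g hg) (h' g hg)
  zero_mem' g _ := by rw [zero_mul]; exact zero_mem _
  smul_mem' r f h g hg := by
    rw [Algebra.smul_def, mul_assoc]; exact mul_mem ⟨r, rfl⟩ (h g hg)

/-- `𝕏` has minimal Dedekind different: `δ^σ_𝕏 = ⊕_{i ≥ 2 r_𝕏} R_i`. -/
def MinimalDedekindDifferent (σ : X.Q →ₗ[X.L0] X.L0) : Prop :=
  (X.different σ).restrictScalars K =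
    (⨆ (i : ℕ) (_ : 2 * X.rX ≤ i), X.Rgr i).map X.iota.toLinearMap

/-! ### Separators and the Cayley–Bacharach property -/

/-- The ideals `𝔟 ⊆ 𝒪_{𝕏,p}` defining the maximal `p`-subschemes `𝕐 ⊆ 𝕏`.  A `p`-subscheme
agrees with `𝕏` at all other points and has local ring `𝒪_{𝕐,p} = 𝒪_{𝕏,p}/𝔟` at `p`; it is
maximal if `deg(𝕐) = deg(𝕏) - dim_K κ(p)`, that is,
`dim_K 𝒪_{𝕐,p} + dim_K κ(p) = dim_K 𝒪_{𝕏,p}`. -/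
def IsMaximalSubscheme (p : X.Supp) (b : Ideal (X.O p)) : Prop :=
  Module.finrank K (X.O p ⧸ b) + Module.finrank K (IsLocalRing.ResidueField (X.O p)) =
    Module.finrank K (X.O p)

/-- `s` is a socle element of `𝒪_{𝕏,p}` corresponding to the `p`-subscheme given by `b`. -/
def IsSocleGenerator (p : X.Supp) (b : Ideal (X.O p)) (s : X.O p) : Prop :=
  s ≠ 0 ∧ (∀ a ∈ IsLocalRing.maximalIdeal (X.O p), a * s = 0) ∧ b = Ideal.span {s}

open Classical in
/-- `μ(a) = min {i | (0,…,0,a T_j^i,0,…,0) ∈ R}` for `a ∈ 𝒪_{𝕏,p_j}`. -/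
def mu (p : X.Supp) (a : X.O p) : ℕ :=
  sInf {i : ℕ | (Pi.single p (LaurentPolynomial.C a * LaurentPolynomial.T (i : ℤ)) : X.Q) ∈
    (algebraMap X.R X.Q).range}

/-- `m = μ_{𝕐/𝕏}` is the maximal degree of a minimal separator of the maximal `p`-subscheme `𝕐`
given by `b`: for a socle element `s` corresponding to `𝕐` and elements `e_1,…,e_ϰ` whose residue
classes form a `K`-basis of `κ(p)`, it is the maximum of the degrees `μ(e_k s)` of the minimal
separators (the value does not depend on these choices). -/
def IsMaxSeparatorDegree (p : X.Supp) (b : Ideal (X.O p)) (m : ℕ) : Prop :=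
  ∃ (s : X.O p) (ϰ : ℕ) (e : Fin ϰ → X.O p),
    X.IsSocleGenerator p b s ∧
    LinearIndependent K (fun k => IsLocalRing.residue (X.O p) (e k)) ∧
    Submodule.span K (Set.range fun k => IsLocalRing.residue (X.O p) (e k)) = ⊤ ∧
    m = Finset.univ.sup fun k => X.mu p (e k * s)

/-- `deg_𝕏(p) = min {μ_{𝕐/𝕏} | 𝕐 a maximal p-subscheme of 𝕏}`. -/
def degPt (p : X.Supp) : ℕ :=
  sInf {m : ℕ | ∃ b : Ideal (X.O p), X.IsMaximalSubscheme p b ∧ X.IsMaxSeparatorDegree p b m}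

/-- `𝕏` is a Cayley–Bacharach scheme: `deg_𝕏(p) ≥ r_𝕏` for every point `p` of the support. -/
def CayleyBacharach : Prop := ∀ p : X.Supp, X.rX ≤ X.degPt p

end ZeroDimSubscheme

end

noncomputable section

namespace ZeroDimSubscheme

variable {K : Type*} [Field K] {n : ℕ} (X : ZeroDimSubscheme K n)

/-! ### Homogeneous elements and components of `Q^h(R)` -/

/-- The homogeneous element `(a_j T_j^k)_j` of `Q^h(R)`. -/
def homog (k : ℤ) : (∀ p, X.O p) →ₗ[K] X.Q where
  toFun a p := LaurentPolynomial.C (a p) * LaurentPolynomial.T k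
  map_add' a b := funext fun p => by simp [add_mul]
  map_smul' c a := funext fun p => by
    rw [RingHom.id_apply, Pi.smul_apply, Pi.smul_apply, ← LaurentPolynomial.single_eq_C_mul_T,
      ← LaurentPolynomial.single_eq_C_mul_T, AddMonoidAlgebra.smul_single]

/-- The tuple of coefficients in degree `k` of an element of `Q^h(R)`. -/
def comp (k : ℤ) : X.Q →+ ∀ p, X.O p where
  toFun q p := AddMonoidAlgebra.coeff (q p) k
  map_zero' := rfl
  map_add' _ _ := rfl

variable {X}

theorem homog_apply (k : ℤ) (a : ∀ p, X.O p) (p : X.Supp) :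
    X.homog k a p = AddMonoidAlgebra.single k (a p) :=
  (LaurentPolynomial.single_eq_C_mul_T _ _).symm

theorem comp_apply (k : ℤ) (q : X.Q) (p : X.Supp) :
    X.comp k q p = AddMonoidAlgebra.coeff (q p) k := rfl

theorem homog_mul_homog (k l : ℤ) (a b : ∀ p, X.O p) :
    X.homog k a * X.homog l b = X.homog (k + l) (a * b) := by
  funext p
  simp only [Pi.mul_apply, homog_apply, AddMonoidAlgebra.single_mul_single]

theorem homog_zero_one : X.homog 0 1 = 1 := by
  funext p
  rw [homog_apply]
  rfl

theorem comp_homog (k l : ℤ) (a : ∀ p, X.O p) :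
    X.comp k (X.homog l a) = if l = k then a else 0 := by
  funext p
  rw [comp_apply, homog_apply, AddMonoidAlgebra.coeff_single, Finsupp.single_apply]
  split_ifs <;> rfl

theorem comp_homog_self (k : ℤ) (a : ∀ p, X.O p) : X.comp k (X.homog k a) = a := by
  rw [comp_homog, if_pos rfl]

theorem homog_injective (k : ℤ) : Function.Injective (X.homog k) := fun a b h => by
  rw [← comp_homog_self k a, h, comp_homog_self]

theorem comp_mul_homog (k l : ℤ) (q : X.Q) (b : ∀ p, X.O p) :
    X.comp k (q * X.homog l b) = X.comp (k - l) q * b := by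
  funext p
  rw [Pi.mul_apply, comp_apply, comp_apply, Pi.mul_apply, homog_apply]
  exact AddMonoidAlgebra.coeff_mul_single_eq_coeff_mul _ fun _ _ => eq_sub_iff_add_eq.symm

theorem ext_comp {q q' : X.Q} (h : ∀ k, X.comp k q = X.comp k q') : q = q' :=
  funext fun p => LaurentPolynomial.ext fun k => congr_fun (h k) p

theorem exists_sum_homog (q : X.Q) : ∃ s : Finset ℤ, q = ∑ k ∈ s, X.homog k (X.comp k q) := by
  classical
  have := Fintype.ofFinite X.Supp
  refine ⟨Finset.univ.biUnion fun p => (AddMonoidAlgebra.coeff (q p)).support,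
    ext_comp fun k => ?_⟩
  rw [map_sum]
  simp only [comp_homog, Finset.sum_ite_eq']
  split_ifs with h
  · rfl
  · funext p
    simp only [Finset.mem_biUnion, Finset.mem_univ, true_and, not_exists,
      Finsupp.notMem_support_iff] at h
    exact h p

theorem comp_mul_eq_zero {q q' : X.Q} {m m' : ℤ} (h : ∀ k < m, X.comp k q = 0)
    (h' : ∀ k < m', X.comp k q' = 0) : ∀ k < m + m', X.comp k (q * q') = 0 := by
  intro k hk
  obtain ⟨s, hs⟩ := exists_sum_homog q'
  rw [hs, Finset.mul_sum, map_sum]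
  refine Finset.sum_eq_zero fun l _ => ?_
  rw [comp_mul_homog]
  by_cases hl : l < m'
  · rw [h' l hl, mul_zero]
  · rw [h (k - l) (by omega), zero_mul]

theorem mem_Rtilde_iff {q : X.Q} : q ∈ X.Rtilde ↔ ∀ k < 0, X.comp k q = 0 := by
  constructor
  · rintro ⟨f, rfl⟩ k hk
    funext p
    change AddMonoidAlgebra.coeff (Polynomial.toLaurent (f p)) k = 0
    rw [← Finsupp.notMem_support_iff, LaurentPolynomial.support_coeff_toLaurent]
    simp only [Finset.mem_map, Nat.castEmbedding_apply, not_exists, not_and]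
    intro a _ ha
    omega
  · intro h
    obtain ⟨s, hs⟩ := exists_sum_homog q
    rw [hs]
    refine sum_mem fun k _ => ?_
    by_cases hk : k < 0
    · rw [h k hk, map_zero]; exact zero_mem _
    · obtain ⟨k, rfl⟩ := Int.eq_ofNat_of_zero_le (not_lt.1 hk)
      refine RingHom.mem_range.2
        ⟨fun p => Polynomial.C (X.comp k q p) * Polynomial.X ^ k, funext fun p => ?_⟩
      rw [homog_apply, LaurentPolynomial.single_eq_C_mul_T]
      exact Polynomial.toLaurent_C_mul_X_pow _ _

theorem homog_mem_Rtilde (i : ℕ) (a : ∀ p, X.O p) : X.homog i a ∈ X.Rtilde :=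
  mem_Rtilde_iff.2 fun k hk => by rw [comp_homog, if_neg (by omega)]

/-! ### The image of `R` in `Q^h(R)` -/

variable (X) in
/-- The tuple of germs of a polynomial. -/
def germs (F : MvPolynomial (Fin (n + 1)) K) : ∀ p, X.O p := fun p => X.germ p F

theorem algebraMap_mk_of_isHomogeneous {F : MvPolynomial (Fin (n + 1)) K} {i : ℕ}
    (hF : F.IsHomogeneous i) :
    algebraMap X.R X.Q (Ideal.Quotient.mk X.ideal F) = X.homog i (X.germs F) :=
  funext fun p => X.iotaP_of_isHomogeneous hF p

theorem comp_algebraMap_mk (F : MvPolynomial (Fin (n + 1)) K) (i : ℕ) :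
    X.comp i (algebraMap X.R X.Q (Ideal.Quotient.mk X.ideal F)) =
      X.germs (MvPolynomial.homogeneousComponent i F) := by
  conv_lhs => rw [← MvPolynomial.sum_homogeneousComponent F]
  rw [map_sum, map_sum, map_sum]
  simp only [algebraMap_mk_of_isHomogeneous (MvPolynomial.homogeneousComponent_isHomogeneous _ F),
    comp_homog, Nat.cast_inj, Finset.sum_ite_eq']
  split_ifs with h
  · rfl
  · rw [MvPolynomial.homogeneousComponent_eq_zero _ _ (by simpa using h)]
    funext p
    exact (map_zero (X.germ p)).symm

theorem exists_form_of_mem_range {q : X.Q} (hq : q ∈ (algebraMap X.R X.Q).range) (i : ℕ) :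
    ∃ f ∈ X.Rgr i, algebraMap X.R X.Q f = X.homog i (X.comp i q) := by
  obtain ⟨f, rfl⟩ := hq
  obtain ⟨F, rfl⟩ := Ideal.Quotient.mk_surjective f
  have h := MvPolynomial.homogeneousComponent_isHomogeneous i F
  exact ⟨_, ⟨_, h, rfl⟩, by rw [comp_algebraMap_mk]; exact algebraMap_mk_of_isHomogeneous h⟩

theorem comp_eq_zero_of_mem_range {q : X.Q} (hq : q ∈ (algebraMap X.R X.Q).range) :
    ∀ k < 0, X.comp k q = 0 := by
  obtain ⟨f, rfl⟩ := hq
  exact mem_Rtilde_iff.1 (X.algebraMap_mem_Rtilde f)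

theorem homog_comp_mem_range {q : X.Q} (hq : q ∈ (algebraMap X.R X.Q).range) (k : ℤ) :
    X.homog k (X.comp k q) ∈ (algebraMap X.R X.Q).range := by
  by_cases hk : k < 0
  · rw [comp_eq_zero_of_mem_range hq k hk, map_zero]
    exact zero_mem _
  · obtain ⟨k, rfl⟩ := Int.eq_ofNat_of_zero_le (not_lt.1 hk)
    obtain ⟨f, -, hf⟩ := exists_form_of_mem_range hq k
    exact ⟨f, hf⟩

theorem algebraMap_x0 : algebraMap X.R X.Q X.x0 = X.homog 1 1 := by
  refine (algebraMap_mk_of_isHomogeneous (MvPolynomial.isHomogeneous_X K 0)).trans ?_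
  congr 1
  exact funext fun p => X.germ_X0 p

theorem algebraMap_x0_pow (k : ℕ) : algebraMap X.R X.Q (X.x0 ^ k) = X.homog k 1 := by
  induction k with
  | zero => rw [pow_zero, map_one]; exact homog_zero_one.symm
  | succ k ih => rw [pow_succ, map_mul, ih, algebraMap_x0, homog_mul_homog, mul_one]; rfl

/-- The homogeneous component `R_i`, dehomogenized. -/
def dehomog (X : ZeroDimSubscheme K n) (i : ℕ) : Submodule K (∀ p, X.O p) :=
  (LinearMap.range X.iota.toLinearMap).comap (X.homog i)

theorem mem_dehomog {i : ℕ} {a : ∀ p, X.O p} :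
    a ∈ X.dehomog i ↔ X.homog i a ∈ (algebraMap X.R X.Q).range := Iff.rfl

theorem dehomog_mono : Monotone X.dehomog := by
  intro i j hij a ha
  rw [mem_dehomog] at ha ⊢
  have h := mul_mem ha ⟨X.x0 ^ (j - i), rfl⟩
  rwa [algebraMap_x0_pow, homog_mul_homog, mul_one, ← Nat.cast_add, Nat.add_sub_cancel' hij] at h

theorem map_homog_dehomog (i : ℕ) :
    (X.dehomog i).map (X.homog i) = (X.Rgr i).map X.iota.toLinearMap := by
  ext q
  constructor
  · rintro ⟨a, ha, rfl⟩
    obtain ⟨f, hf, h⟩ := exists_form_of_mem_range (mem_dehomog.1 ha) i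
    rw [comp_homog_self] at h
    exact ⟨f, hf, h⟩
  · rintro ⟨_, ⟨F, hF, rfl⟩, rfl⟩
    have h := algebraMap_mk_of_isHomogeneous (X := X) hF
    exact ⟨_, mem_dehomog.2 ⟨_, h⟩, h.symm⟩

theorem finrank_dehomog (i : ℕ) :
    Module.finrank K (X.dehomog i) = Module.finrank K (X.Rgr i) := by
  have h1 := (Submodule.equivMapOfInjective (X.homog i) (homog_injective i)
    (X.dehomog i)).finrank_eq
  have h2 := (Submodule.equivMapOfInjective X.iota.toLinearMap X.iota_injective
    (X.Rgr i)).finrank_eq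
  rw [h1, map_homog_dehomog, h2]

instance (p : X.Supp) : Module.Finite K (X.O p) := by
  refine Module.Finite.of_surjective (IsScalarTower.toAlgHom K X.Gam (X.O p)).toLinearMap
    fun a => ?_
  classical
  obtain ⟨b, hb⟩ := X.toPi_bijective.2 (Pi.single p a)
  exact ⟨b, (congr_fun hb p).trans (Pi.single_eq_same p a)⟩

theorem finrank_pi_O : Module.finrank K (∀ p, X.O p) = X.deg := by
  have := Fintype.ofFinite X.Supp
  rw [Module.finrank_pi_fintype, deg, finsum_eq_sum_of_fintype]

theorem exists_mem_dehomog (a : ∀ p, X.O p) : ∃ i, a ∈ X.dehomog i := by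
  obtain ⟨b, rfl⟩ := X.toPi_bijective.2 a
  obtain ⟨d, F, hF, rfl⟩ := X.exists_form b
  exact ⟨d, mem_dehomog.2 ⟨_, algebraMap_mk_of_isHomogeneous hF⟩⟩

theorem exists_dehomog_eq_top : ∃ i, X.dehomog i = ⊤ := by
  obtain ⟨N, hN⟩ := monotone_stabilizes_iff_noetherian.2
    (inferInstanceAs (IsNoetherian K (∀ p, X.O p))) ⟨X.dehomog, dehomog_mono⟩
  refine ⟨N, eq_top_iff.2 fun a _ => ?_⟩
  obtain ⟨i, hi⟩ := exists_mem_dehomog a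
  exact (hN _ (le_max_right i N)).symm.le (dehomog_mono (le_max_left i N) hi)

theorem dehomog_eq_top {i : ℕ} (hi : X.rX ≤ i) : X.dehomog i = ⊤ := by
  have hne : {i : ℕ | ∀ j, i ≤ j → Module.finrank K (X.Rgr j) = X.deg}.Nonempty := by
    obtain ⟨N, hN⟩ := exists_dehomog_eq_top (X := X)
    refine ⟨N, fun j hj => ?_⟩
    have hj' : X.dehomog j = ⊤ := eq_top_iff.2 (hN ▸ dehomog_mono hj)
    rw [← finrank_dehomog, hj', finrank_top, finrank_pi_O]
  refine Submodule.eq_top_of_finrank_eq ?_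
  rw [finrank_dehomog, finrank_pi_O]
  exact Nat.sInf_mem hne i hi

theorem homog_mem_range {k : ℤ} (hk : X.rX ≤ k) (a : ∀ p, X.O p) :
    X.homog k a ∈ (algebraMap X.R X.Q).range := by
  obtain ⟨k, rfl⟩ := Int.eq_ofNat_of_zero_le ((Int.natCast_nonneg _).trans hk)
  rw [← mem_dehomog, dehomog_eq_top (Int.ofNat_le.1 hk)]
  trivial

theorem mem_map_iSup_Rgr_iff {m : ℕ} (hm : X.rX ≤ m) {q : X.Q} :
    q ∈ (⨆ (i : ℕ) (_ : m ≤ i), X.Rgr i).map X.iota.toLinearMap ↔ ∀ k < (m : ℤ), X.comp k q = 0 := by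
  simp only [Submodule.map_iSup, ← map_homog_dehomog]
  constructor
  · intro h k hk
    induction h using Submodule.iSup_induction' with
    | mem i x hx =>
      induction hx using Submodule.iSup_induction' with
      | mem hi x hx =>
        obtain ⟨a, -, rfl⟩ := hx
        rw [comp_homog, if_neg (by omega)]
      | zero => exact map_zero _
      | add x y _ _ hx hy => rw [map_add, hx, hy, add_zero]
    | zero => exact map_zero _
    | add x y _ _ hx hy => rw [map_add, hx, hy, add_zero]
  · intro h
    obtain ⟨s, hs⟩ := exists_sum_homog q
    rw [hs]
    refine sum_mem fun k _ => ?_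
    by_cases hk : k < m
    · rw [h k hk, map_zero]; exact zero_mem _
    · obtain ⟨k, rfl⟩ := Int.eq_ofNat_of_zero_le ((Int.natCast_nonneg _).trans (not_lt.1 hk))
      have hk' : m ≤ k := Int.ofNat_le.1 (not_lt.1 hk)
      refine Submodule.mem_iSup_of_mem k (Submodule.mem_iSup_of_mem hk' ?_)
      rw [dehomog_eq_top (hm.trans hk')]
      exact ⟨_, trivial, rfl⟩

theorem mem_range_of_comp_eq_zero {q : X.Q} (h : ∀ k < (X.rX : ℤ), X.comp k q = 0) :
    q ∈ (algebraMap X.R X.Q).range := by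
  obtain ⟨f, -, hf⟩ := (mem_map_iSup_Rgr_iff le_rfl).2 h
  exact ⟨f, hf⟩

/-! ### Socle elements and the Cayley–Bacharach property -/

instance (p : X.Supp) : IsArtinianRing (X.O p) := IsArtinianRing.of_finite K (X.O p)

theorem exists_mul_mem_socle {p : X.Supp} {a : X.O p} (ha : a ≠ 0) :
    ∃ t : X.O p, t * a ≠ 0 ∧ ∀ m ∈ IsLocalRing.maximalIdeal (X.O p), m * (t * a) = 0 := by
  have hne : Ideal.span {a} ≠ ⊥ := by simpa using ha
  obtain ⟨J, hJ, hle⟩ := (eq_bot_or_exists_atom_le (Ideal.span {a})).resolve_left hne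
  obtain ⟨s, hs, hs0⟩ := (Submodule.ne_bot_iff _).1 hJ.1
  obtain ⟨t, rfl⟩ := Ideal.mem_span_singleton'.1 (hle hs)
  have : IsSimpleModule (X.O p) J := isSimpleModule_iff_isAtom.2 hJ
  refine ⟨t, hs0, fun m hm => ?_⟩
  rw [← IsLocalRing.eq_maximalIdeal (IsSimpleModule.annihilator_isMaximal (M := J))] at hm
  exact congr_arg Subtype.val (Module.mem_annihilator.1 hm ⟨_, hs⟩)

theorem isMaximalSubscheme_span_singleton {p : X.Supp} {s : X.O p} (hs0 : s ≠ 0)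
    (hs : ∀ m ∈ IsLocalRing.maximalIdeal (X.O p), m * s = 0) :
    X.IsMaximalSubscheme p (Ideal.span {s}) := by
  let f : X.O p →ₗ[K] X.O p := LinearMap.mulRight K s
  let g : X.O p →ₗ[K] X.O p ⧸ Ideal.span {s} := (Ideal.Quotient.mkₐ K (Ideal.span {s})).toLinearMap
  let h : X.O p →ₗ[K] IsLocalRing.ResidueField (X.O p) :=
    (IsScalarTower.toAlgHom K (X.O p) (IsLocalRing.ResidueField (X.O p))).toLinearMap
  have hg : LinearMap.range g = ⊤ := LinearMap.range_eq_top.2 Ideal.Quotient.mk_surjective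
  have hh : LinearMap.range h = ⊤ := LinearMap.range_eq_top.2 IsLocalRing.residue_surjective
  have hfg : LinearMap.range f = LinearMap.ker g := by
    ext x
    rw [LinearMap.mem_ker]
    exact Ideal.mem_span_singleton'.symm.trans Ideal.Quotient.eq_zero_iff_mem.symm
  have hfh : LinearMap.ker f = LinearMap.ker h := by
    ext x
    rw [LinearMap.mem_ker, LinearMap.mem_ker]
    change x * s = 0 ↔ IsLocalRing.residue (X.O p) x = 0
    rw [IsLocalRing.residue_eq_zero_iff]
    refine ⟨fun hx => (IsLocalRing.mem_maximalIdeal x).2 fun hu => hs0 ?_, hs x⟩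
    exact hu.mul_right_eq_zero.1 hx
  have ef := f.finrank_range_add_finrank_ker
  have eg := g.finrank_range_add_finrank_ker
  have eh := h.finrank_range_add_finrank_ker
  rw [hg, finrank_top] at eg
  rw [hh, finrank_top] at eh
  rw [hfg, hfh] at ef
  rw [IsMaximalSubscheme]
  omega

theorem single_eq_homog [DecidableEq X.Supp] (p : X.Supp) (a : X.O p) (k : ℤ) :
    (Pi.single p (LaurentPolynomial.C a * LaurentPolynomial.T k) : X.Q) =
      X.homog k (Pi.single p a) := by
  funext p'
  by_cases h : p' = p
  · subst h
    rw [homog_apply, Pi.single_eq_same, Pi.single_eq_same, LaurentPolynomial.single_eq_C_mul_T]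
  · rw [homog_apply, Pi.single_eq_of_ne h, Pi.single_eq_of_ne h, AddMonoidAlgebra.single_zero]

theorem mu_eq_sInf [DecidableEq X.Supp] (p : X.Supp) (a : X.O p) :
    X.mu p a = sInf {i : ℕ | Pi.single p a ∈ X.dehomog i} := by
  rw [mu]
  congr 1
  ext i
  rw [Set.mem_ofPred_eq, Set.mem_ofPred_eq, mem_dehomog, ← single_eq_homog]
  convert Iff.rfl

theorem single_mem_dehomog_mu [DecidableEq X.Supp] (p : X.Supp) (a : X.O p) :
    Pi.single p a ∈ X.dehomog (X.mu p a) := by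
  rw [mu_eq_sInf]
  exact Nat.sInf_mem (s := {i : ℕ | Pi.single p a ∈ X.dehomog i}) (exists_mem_dehomog _)

theorem exists_isMaxSeparatorDegree {p : X.Supp} {a : X.O p} (ha : a ≠ 0) :
    ∃ (b : Ideal (X.O p)) (s : X.O p) (d : ℕ) (e : Fin d → X.O p),
      (∃ t, s = t * a) ∧ X.IsMaximalSubscheme p b ∧
        X.IsMaxSeparatorDegree p b (Finset.univ.sup fun k => X.mu p (e k * s)) := by
  obtain ⟨t, ht0, ht⟩ := exists_mul_mem_socle ha
  let h : X.O p →ₗ[K] IsLocalRing.ResidueField (X.O p) :=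
    (IsScalarTower.toAlgHom K (X.O p) (IsLocalRing.ResidueField (X.O p))).toLinearMap
  have : Module.Finite K (IsLocalRing.ResidueField (X.O p)) :=
    Module.Finite.of_surjective h IsLocalRing.residue_surjective
  let B := Module.finBasis K (IsLocalRing.ResidueField (X.O p))
  choose e he using fun k => IsLocalRing.residue_surjective (B k)
  refine ⟨Ideal.span {t * a}, t * a, _, e, ⟨t, rfl⟩, isMaximalSubscheme_span_singleton ht0 ht,
    t * a, _, e, ⟨ht0, ht, rfl⟩, ?_, ?_, rfl⟩
  · simp only [he]
    exact B.linearIndependent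
  · simp only [he]
    exact B.span_eq

/-- `𝕏` is a Cayley–Bacharach scheme iff `R_{r_𝕏 - 1}`, dehomogenized, contains no non-zero
ideal. -/
theorem cayleyBacharach_iff : X.CayleyBacharach ↔
    ∀ i < X.rX, ∀ a : ∀ p, X.O p, (∀ b, a * b ∈ X.dehomog i) → a = 0 := by
  classical
  constructor
  · intro hCB i hi a ha
    by_contra hne
    obtain ⟨p, hp⟩ := Function.ne_iff.1 hne
    obtain ⟨b, s, d, e, ⟨t, rfl⟩, hb, hm⟩ := exists_isMaxSeparatorDegree hp
    have h1 : X.degPt p ≤ Finset.univ.sup fun k => X.mu p (e k * (t * a p)) :=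
      Nat.sInf_le ⟨b, hb, hm⟩
    have h2 : (Finset.univ.sup fun k => X.mu p (e k * (t * a p))) ≤ i := by
      refine Finset.sup_le fun k _ => ?_
      rw [mu_eq_sInf]
      refine Nat.sInf_le ?_
      have h3 := ha (Pi.single p (e k * t))
      rwa [← Pi.single_mul_right, mul_comm, mul_assoc] at h3
    exact absurd (hCB p) (by omega)
  · intro h p
    have hne : {m : ℕ | ∃ b : Ideal (X.O p),
        X.IsMaximalSubscheme p b ∧ X.IsMaxSeparatorDegree p b m}.Nonempty := by
      obtain ⟨b, s, d, e, -, hb, hm⟩ := exists_isMaxSeparatorDegree (one_ne_zero (α := X.O p))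
      exact ⟨_, b, hb, hm⟩
    obtain ⟨b, -, s, d, e, ⟨hs0, hs, -⟩, -, hspan, hm⟩ := Nat.sInf_mem hne
    change X.degPt p = _ at hm
    by_contra hlt
    have h1 : ∀ t : X.O p, Pi.single p (t * s) ∈ X.dehomog (X.degPt p) := by
      intro t
      have h2 : IsLocalRing.residue (X.O p) t ∈ Submodule.span K
          (Set.range fun k => IsLocalRing.residue (X.O p) (e k)) := hspan ▸ trivial
      obtain ⟨c, hc⟩ := (Submodule.mem_span_range_iff_exists_fun K).1 h2
      have h3 : t - ∑ k, c k • e k ∈ IsLocalRing.maximalIdeal (X.O p) := by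
        rw [← IsLocalRing.residue_eq_zero_iff, map_sub, ← hc, map_sum, sub_eq_zero]
        refine Finset.sum_congr rfl fun k _ => ?_
        rw [Algebra.smul_def, Algebra.smul_def, map_mul]
        rfl
      have h4 := hs _ h3
      rw [sub_mul, sub_eq_zero, Finset.sum_mul] at h4
      rw [h4, ← LinearMap.single_apply (R := K) (φ := X.O), map_sum]
      refine sum_mem fun k _ => ?_
      rw [smul_mul_assoc, map_smul]
      refine Submodule.smul_mem _ _ (dehomog_mono ?_ (single_mem_dehomog_mu p (e k * s)))
      rw [hm]
      exact Finset.le_sup (f := fun k => X.mu p (e k * s)) (Finset.mem_univ k)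
    refine hs0 (Pi.single_eq_zero_iff.1 (h _ (not_le.1 hlt) (Pi.single p s) fun b => ?_))
    rw [← Pi.single_mul_left, mul_comm]
    exact h1 _

/-! ### The conductor of a Cayley–Bacharach scheme -/

theorem mem_conductor_iff (hX : X.CayleyBacharach) {q : X.Q} :
    q ∈ X.conductor ↔ ∀ k < (X.rX : ℤ), X.comp k q = 0 := by
  constructor
  · rintro ⟨hq, h⟩ k hk
    by_cases hk0 : k < 0
    · exact mem_Rtilde_iff.1 hq k hk0
    obtain ⟨k, rfl⟩ := Int.eq_ofNat_of_zero_le (not_lt.1 hk0)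
    refine cayleyBacharach_iff.1 hX k (Int.ofNat_lt.1 hk) _ fun b => ?_
    have h1 := homog_comp_mem_range (h _ (homog_mem_Rtilde 0 b)) k
    rwa [comp_mul_homog, Nat.cast_zero, sub_zero] at h1
  · intro h
    refine ⟨mem_Rtilde_iff.2 fun k hk => h k (by omega), fun g hg =>
      mem_range_of_comp_eq_zero ?_⟩
    have := comp_mul_eq_zero h (mem_Rtilde_iff.1 hg)
    rwa [add_zero] at this

theorem mem_conductor_sq_iff (hX : X.CayleyBacharach) {q : X.Q} :
    q ∈ X.conductor ^ 2 ↔ ∀ k < ((2 * X.rX : ℕ) : ℤ), X.comp k q = 0 := by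
  have h2 : ((2 * X.rX : ℕ) : ℤ) = X.rX + X.rX := by push_cast; ring
  rw [pow_two, h2]
  constructor
  · intro h
    induction h using Submodule.mul_induction_on' with
    | mem_mul_mem a ha b hb =>
      exact comp_mul_eq_zero ((mem_conductor_iff hX).1 ha) ((mem_conductor_iff hX).1 hb)
    | add x _ y _ hx hy =>
      intro k hk
      rw [map_add, hx k hk, hy k hk, add_zero]
  · intro h
    have hq : q = q * X.homog (-X.rX) 1 * X.homog X.rX 1 := by
      rw [mul_assoc, homog_mul_homog, neg_add_cancel, mul_one, homog_zero_one, mul_one]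
    rw [hq]
    refine Submodule.mul_mem_mul ((mem_conductor_iff hX).2 fun k hk => ?_)
      ((mem_conductor_iff hX).2 fun k hk => ?_)
    · rw [comp_mul_homog, h _ (by omega), zero_mul]
    · rw [comp_homog, if_neg (by omega)]

theorem conductor_sq_eq (hX : X.CayleyBacharach) :
    (X.conductor ^ 2).restrictScalars K =
      (⨆ (i : ℕ) (_ : 2 * X.rX ≤ i), X.Rgr i).map X.iota.toLinearMap := by
  ext q
  rw [mem_map_iSup_Rgr_iff (by omega)]
  exact mem_conductor_sq_iff hX

/-! ### The Dedekind different -/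

theorem homog_one_mem_L0 (k : ℤ) : X.homog k 1 ∈ X.L0 := by
  rcases Int.le_total 0 k with hk | hk
  · obtain ⟨k, rfl⟩ := Int.eq_ofNat_of_zero_le hk
    rw [← algebraMap_x0_pow, map_pow]
    exact pow_mem (Algebra.subset_adjoin (Set.mem_insert _ _)) k
  · obtain ⟨k, rfl⟩ := Int.exists_eq_neg_ofNat hk
    have h : X.homog (-k) 1 = X.x0inv ^ k := by
      funext p
      rw [homog_apply, Pi.pow_apply, x0inv, LaurentPolynomial.T_pow, mul_neg, mul_one]
      rfl
    have h1 : X.x0inv ∈ X.L0 :=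
      Algebra.subset_adjoin (Set.mem_insert_of_mem _ (Set.mem_singleton _))
    rw [h]
    exact pow_mem h1 k

variable {σ : X.Q →ₗ[X.L0] X.L0}

theorem IsTraceMap.comp_apply_homog (hσ : X.IsTraceMap σ) {j k : ℤ} (hjk : k ≠ j)
    (a : ∀ p, X.O p) : X.comp j (σ (X.homog k a) : X.Q) = 0 := by
  funext p
  obtain ⟨c, hc⟩ := hσ.degree_zero k _ (fun p => ⟨a p, rfl⟩ : X.homog k a ∈ X.Qgr k) p
  rw [comp_apply, hc, ← LaurentPolynomial.single_eq_C_mul_T, AddMonoidAlgebra.coeff_single,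
    Finsupp.single_eq_of_ne hjk.symm]
  rfl

theorem IsTraceMap.apply_homog_comp_eq_zero (hσ : X.IsTraceMap σ) {q : X.Q} {j : ℤ}
    (h : X.comp j (σ q : X.Q) = 0) : σ (X.homog j (X.comp j q)) = 0 := by
  have h1 : X.comp j (σ q : X.Q) = X.comp j (σ (X.homog j (X.comp j q)) : X.Q) := by
    obtain ⟨s, hs⟩ := exists_sum_homog q
    by_cases hj : j ∈ s
    · conv_lhs => rw [hs]
      rw [map_sum, AddSubmonoidClass.coe_finsetSum, map_sum]
      exact Finset.sum_eq_single j (fun k _ hk => hσ.comp_apply_homog hk _)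
        fun hj' => absurd hj hj'
    · have h0 : X.comp j q = 0 := by
        rw [hs, map_sum]
        exact Finset.sum_eq_zero fun k hk => by
          rw [comp_homog, if_neg (ne_of_mem_of_not_mem hk hj)]
      rw [h0, map_zero, map_zero]
      conv_lhs => rw [hs]
      rw [map_sum, AddSubmonoidClass.coe_finsetSum, map_sum]
      exact (Finset.sum_eq_zero fun k hk =>
        hσ.comp_apply_homog (ne_of_mem_of_not_mem hk hj) _).trans (map_zero _).symm
  refine Subtype.ext (ext_comp fun k => ?_)
  by_cases hk : j = k
  · subst hk
    rw [← h1, h]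
    exact (map_zero _).symm
  · rw [hσ.comp_apply_homog hk]
    exact (map_zero _).symm

/-- The Dedekind complementary module lives in degrees `≥ -r_𝕏`. -/
theorem comp_eq_zero_of_mem_complementary (hσ : X.IsTraceMap σ) {g : X.Q}
    (hg : g ∈ X.complementary σ) : ∀ k < -(X.rX : ℤ), X.comp k g = 0 := by
  intro k hk
  obtain ⟨φ, hφ⟩ := hg
  have h1 : ∀ b, σ (X.homog (k + X.rX) (X.comp k g * b)) = 0 := by
    intro b
    obtain ⟨f, hf⟩ := homog_mem_range (X := X) le_rfl b
    have h2 : (σ (g * algebraMap X.R X.Q f) : X.Q) = algebraMap X.R X.Q (φ f) := hφ f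
    have h3 := hσ.apply_homog_comp_eq_zero
      (comp_eq_zero_of_mem_range ⟨_, h2.symm⟩ (k + X.rX) (by omega))
    rwa [hf, comp_mul_homog, add_sub_cancel_right] at h3
  have h4 : X.traceMul σ (X.homog k (X.comp k g)) = X.traceMul σ 0 := by
    ext1 q
    change σ (X.homog k (X.comp k g) * q) = σ (0 * q)
    rw [zero_mul, map_zero]
    obtain ⟨s, hs⟩ := exists_sum_homog q
    rw [hs, Finset.mul_sum, map_sum]
    refine Finset.sum_eq_zero fun m _ => ?_
    have h5 : X.homog k (X.comp k g) * X.homog m (X.comp m q) =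
        (⟨_, homog_one_mem_L0 (m - X.rX)⟩ : X.L0) •
          X.homog (k + X.rX) (X.comp k g * X.comp m q) := by
      change _ = X.homog (m - X.rX) 1 * _
      rw [homog_mul_homog, homog_mul_homog, one_mul]
      congr 1
      congr 1
      ring
    rw [h5, map_smul, h1, smul_zero]
  rw [← comp_homog_self k (X.comp k g), hσ.basis.1 h4, map_zero]

/-- If `R_i`, dehomogenized, contains the ideal generated by `a`, then `a` yields an element of the
Dedekind different of degree `r_𝕏 + i`. -/
theorem homog_mem_different (hσ : X.IsTraceMap σ) {i : ℕ} {a : ∀ p, X.O p}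
    (ha : ∀ b, a * b ∈ X.dehomog i) : X.homog (X.rX + i) a ∈ X.different σ := by
  intro g hg
  obtain ⟨s, hs⟩ := exists_sum_homog g
  rw [hs, Finset.mul_sum]
  refine sum_mem fun k _ => ?_
  rw [homog_mul_homog]
  by_cases hk : k < -(X.rX : ℤ)
  · rw [comp_eq_zero_of_mem_complementary hσ hg k hk, mul_zero, map_zero]
    exact zero_mem _
  · obtain ⟨m, hm⟩ := Int.eq_ofNat_of_zero_le (show 0 ≤ X.rX + k by omega)
    have h1 : (X.rX : ℤ) + i + k = (i + m : ℕ) := by push_cast; omega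
    rw [h1, ← mem_dehomog]
    exact dehomog_mono (Nat.le_add_right i m) (ha _)

theorem MinimalDedekindDifferent.cayleyBacharach (hσ : X.IsTraceMap σ)
    (h : X.MinimalDedekindDifferent σ) : X.CayleyBacharach := by
  refine cayleyBacharach_iff.2 fun i hi a ha => ?_
  have h1 : X.homog (X.rX + i) a ∈ (X.different σ).restrictScalars K :=
    homog_mem_different hσ ha
  rw [MinimalDedekindDifferent] at h
  rw [h, mem_map_iSup_Rgr_iff (by omega)] at h1
  have h2 := h1 (X.rX + i) (by push_cast; omega)
  rwa [comp_homog_self] at h2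

end ZeroDimSubscheme

end

/-- A `0`-dimensional locally Gorenstein scheme has minimal Dedekind different iff it is a
Cayley–Bacharach scheme and the square of its conductor is the Dedekind different. -/
theorem dedekind_CB_stmt11 {K : Type*} [Field K] {n : ℕ} (X : ZeroDimSubscheme K n)
    (hX : X.LocallyGorenstein) (σ : X.Q →ₗ[X.L0] X.L0) (hσ : X.IsTraceMap σ) :
    X.MinimalDedekindDifferent σ ↔
      X.CayleyBacharach ∧ X.conductor ^ 2 = X.different σ := by
  constructor
  · intro h
    have hCB := h.cayleyBacharach hσ
    refine ⟨hCB, Submodule.restrictScalars_injective K X.R X.Q ?_⟩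
    rw [ZeroDimSubscheme.conductor_sq_eq hCB]
    exact h.symm
  · rintro ⟨hCB, h⟩
    rw [ZeroDimSubscheme.MinimalDedekindDifferent, ← h, ZeroDimSubscheme.conductor_sq_eq hCB]
end
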